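/- arXiv:2008.01121 — 2 statements merged into one kernel-verified Lean document; each statement's English description precedes it below -/
import Mathlib

section
/- The set {𝒢(M) : M a Coxeter matroid of type (Φ,I)} spans the ℚ-vector space ℚ^{W·δ_I}. Consequently, for any valuative invariant g : Mat_{Φ,I} → A into a ℚ-vector space A, there is at most one ℚ-linear map ψ : ℚ^{W·δ_I} → A with ψ ∘ 𝒢 = g. -/
/-!
The spanning set is exhibited by upper Bruhat intervals. Order `V` by `x ≤ y` iff `y - x` lies in
the cone of positive roots, and let the Bruhat order be generated by `x → s_β x` for positive roots
`β` with `⟪x, β⟫ ≤ 0`; it implies `≤`. For `u` in the orbit put `M_u = {v | u ≤ v in Bruhat order}`.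

* `M_u` is a Coxeter matroid (`SimpleSystem.exists_min`). This is an induction on `w`, multiplying
  on the right by a simple reflection `s` with `w α_s` positive. If `s` raises `u`, then `M_u` is
  stable under `s`. Otherwise `M_u` and `s M_u` lie in the `s`-stable set `M_{su}`, and the
  `w`-minimum `m` of `M_{su}` is not lowered by `s`, which forces `s m ∈ M_u`.
* Every Weyl translate of `M_u` contains a point `≤ u` (`SimpleSystem.exists_le`), by the same
  induction.

Consequently `𝒢(M_u)` is supported on `{x | x ≤ u}`, and its coefficient at `u` is positive because
`w = 1` contributes to it. So the vectors `𝒢(M_u)` form a triangular system with nonzero diagonal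
and span. Uniqueness of `ψ` is then agreement of linear maps on a spanning set.

The induction on `w` (`SimpleSystem.weyl_induction`) rests on two standard facts: simple reflections
generate the Weyl group, and words in them satisfy the exchange property.
-/


open RealInnerProductSpace

noncomputable def indic {V : Type*} (P : Set V) : V → ℤ := P.indicator 1

noncomputable def iv (p : Prop) : ℤ := @ite _ p (Classical.propDecidable p) 1 0

def Valuative {V A : Type*} [AddCommGroup A] (Fam : Set (Set V)) (f : Set V → A) : Prop :=
  ∀ (k : ℕ) (a : Fin k → ℤ) (P : Fin k → Set V),
    (∀ i, P i ∈ Fam) → (∑ i, a i • indic (P i)) = 0 → (∑ i, a i • f (P i)) = 0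

variable {V : Type*} [NormedAddCommGroup V] [InnerProductSpace ℝ V] [FiniteDimensional ℝ V]

def IsPolyhedron (P : Set V) : Prop :=
  P.Nonempty ∧ ∃ s : Finset (V × ℝ), P = {x | ∀ p ∈ s, ⟪p.1, x⟫ ≤ p.2}

def IsFace (Q F : Set V) : Prop :=
  ∃ y : V, F.Nonempty ∧ F = {x | x ∈ Q ∧ ∀ q ∈ Q, ⟪y, q⟫ ≤ ⟪y, x⟫}

def IsConvexCone (C : Set V) : Prop :=
  (0 : V) ∈ C ∧ Convex ℝ C ∧ ∀ c : ℝ, 0 ≤ c → ∀ x ∈ C, c • x ∈ C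

def coneGen (S : Set V) : Set V := ⋂₀ {C : Set V | IsConvexCone C ∧ S ⊆ C}

def tanCone (Q F : Set V) : Set V := coneGen {d | ∃ q ∈ Q, ∃ v ∈ F, d = q - v}

def normCone (Q F : Set V) : Set V := {y | ∀ v ∈ F, ∀ q ∈ Q, ⟪y, q⟫ ≤ ⟪y, v⟫}

def IsExtDef (Q P : Set V) : Prop :=
  IsPolyhedron P ∧ ∀ F : Set V, IsFace P F → ∃ 𝒢 : Set (Set V),
    (∀ G ∈ 𝒢, IsFace Q G) ∧ normCone P F = ⋃ G ∈ 𝒢, normCone Q G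

def lineal (C : Set V) : Set V := C ∩ (-C)

def transl (v : V) (C : Set V) : Set V := (fun x => v + x) '' C

def TightContains (C : Set V) (v : V) (P : Set V) : Prop :=
  P ⊆ transl v C ∧ (P ∩ transl v (lineal C)).Nonempty

/-- `ivq p` is `1` if the proposition `p` holds and `0` otherwise, in `ℚ`. -/
noncomputable def ivq (p : Prop) : ℚ := @ite _ p (Classical.propDecidable p) 1 0

/-- The Weyl group of a root system `R`. -/
def WeylGrp (R : Finset V) : Subgroup (V ≃ₗᵢ[ℝ] V) :=
  Subgroup.closure {s | ∃ α ∈ R, ∀ x : V, s x = x - ((2 * ⟪x, α⟫) / ⟪α, α⟫) • α}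

/-! ### Reflections -/

/-- The orthogonal reflection in the hyperplane perpendicular to `b`. -/
noncomputable def rs (b : V) : V ≃ₗᵢ[ℝ] V := (ℝ ∙ b)ᗮ.reflection

lemma rs_apply (b x : V) : rs b x = x - ((2 * ⟪x, b⟫) / ⟪b, b⟫) • b := by
  rw [rs, Submodule.reflection_orthogonal_apply, Submodule.reflection_singleton_apply,
    real_inner_self_eq_norm_sq, real_inner_comm]
  simp only [RCLike.ofReal_real_eq_id, id_eq]
  module

lemma rs_rs (b x : V) : rs b (rs b x) = x := Submodule.reflection_reflection _ x

lemma rs_mul_self (b : V) : rs b * rs b = 1 := by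
  ext x; exact rs_rs b x

lemma rs_self (b : V) : rs b b = -b := by
  rw [rs_apply]
  by_cases hb : b = 0
  · simp [hb]
  · have : ⟪b, b⟫ ≠ 0 := inner_self_ne_zero.2 hb
    rw [mul_div_assoc, div_self this]; module

lemma rs_inner (b x : V) : ⟪rs b x, b⟫ = -⟪x, b⟫ := by
  have := (rs b).inner_map_map x b
  rw [rs_self, inner_neg_right] at this
  linarith

lemma rs_map (w : V ≃ₗᵢ[ℝ] V) (b x : V) : rs (w b) (w x) = w (rs b x) := by
  simp only [rs_apply, LinearIsometryEquiv.inner_map_map, map_sub, map_smul]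

lemma rs_neg (b : V) : rs (-b) = rs b := by
  ext x
  simp only [rs_apply, inner_neg_right, inner_neg_left, neg_neg]
  module

/-! ### Simple systems and the Bruhat order -/

/-- The data of a reduced root system with a choice of positive roots (those on the positive side
of `z`), whose simple roots `α` admit a dual family `ϖ` up to positive scalars, and such that every
positive root is a nonnegative combination of the simple ones. -/
structure SimpleSystem (R : Finset V) (z : V) {n : ℕ} (α ϖ : Fin n → V) : Prop where
  refl : ∀ a ∈ R, ∀ b ∈ R, rs a b ∈ R
  red : ∀ a ∈ R, ∀ c : ℝ, c • a ∈ R → c = 1 ∨ c = -1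
  reg : ∀ b ∈ R, ⟪z, b⟫ ≠ 0
  mem : ∀ i, α i ∈ R
  pos : ∀ i, 0 < ⟪z, α i⟫
  comb : ∀ b ∈ R, 0 < ⟪z, b⟫ → ∃ c : Fin n → ℝ, (∀ i, 0 ≤ c i) ∧ b = ∑ i, c i • α i
  dual_zero : ∀ i j, i ≠ j → ⟪ϖ i, α j⟫ = 0
  dual_pos : ∀ i, 0 < ⟪ϖ i, α i⟫

/-- One step up in the Bruhat order on an orbit: apply the reflection in a positive root that
pairs nonpositively with `x`. -/
def BStep (R : Finset V) (z x y : V) : Prop :=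
  ∃ b ∈ R, 0 < ⟪z, b⟫ ∧ ⟪x, b⟫ ≤ 0 ∧ y = rs b x

/-- The Bruhat order, encoded as a relation on all of `V`; comparable points lie in one orbit of
the Weyl group. -/
def Bruhat (R : Finset V) (z : V) : V → V → Prop := Relation.ReflTransGen (BStep R z)

/-! ### The cone of positive roots -/

lemma isConvexCone_coneGen (S : Set V) : IsConvexCone (coneGen S) := by
  refine ⟨?_, ?_, ?_⟩
  · rintro C ⟨hC, -⟩; exact hC.1
  · exact convex_sInter fun C hC => hC.1.2.1
  · intro c hc x hx C hC; exact hC.1.2.2 c hc x (hx C hC)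

lemma IsConvexCone.add {C : Set V} (hC : IsConvexCone C) {x y : V} (hx : x ∈ C) (hy : y ∈ C) :
    x + y ∈ C := by
  have h := hC.2.1 hx hy (by norm_num : (0:ℝ) ≤ 1/2) (by norm_num : (0:ℝ) ≤ 1/2) (by norm_num)
  have h2 := hC.2.2 2 (by norm_num) _ h
  convert h2 using 1
  module

/-- The cone of positive roots meets the closed half-space `⟪z, ·⟫ ≤ 0` only in the origin. -/
lemma coneGen_pos {R : Finset V} {z x : V} (hx : x ∈ coneGen {b : V | b ∈ R ∧ 0 < ⟪z, b⟫}) :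
    x = 0 ∨ 0 < ⟪z, x⟫ := by
  refine hx {x | x = 0 ∨ 0 < ⟪z, x⟫} ⟨⟨Or.inl rfl, ?_, ?_⟩, fun b hb => Or.inr hb.2⟩
  · intro x hx y hy a b ha hb hab
    rcases hx with rfl | hx
    · rcases hy with rfl | hy
      · left; simp
      · rcases hb.eq_or_lt with rfl | hb
        · left; simp
        · right; simp only [smul_zero, zero_add, inner_smul_right]; positivity
    · rcases hy with rfl | hy
      · rcases ha.eq_or_lt with rfl | ha
        · left; simp
        · right; simp only [smul_zero, add_zero, inner_smul_right]; positivity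
      · right
        simp only [inner_add_right, inner_smul_right]
        rcases ha.eq_or_lt with rfl | ha
        · have : b = 1 := by linarith
          simpa [this] using hy
        · positivity
  · intro c hc x hx
    rcases hx with rfl | hx
    · left; simp
    · rcases hc.eq_or_lt with rfl | hc
      · left; simp
      · right; simp only [inner_smul_right]; positivity

lemma Bruhat.sub_mem {R : Finset V} {z u v : V} (h : Bruhat R z u v) :
    v - u ∈ coneGen {b : V | b ∈ R ∧ 0 < ⟪z, b⟫} := by
  have hC := isConvexCone_coneGen {b : V | b ∈ R ∧ 0 < ⟪z, b⟫}
  induction h with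
  | refl => simpa using hC.1
  | @tail x y _ hs ih =>
    obtain ⟨b, hb, hzb, hxb, rfl⟩ := hs
    have hbC : b ∈ coneGen {b : V | b ∈ R ∧ 0 < ⟪z, b⟫} := fun C hC => hC.2 ⟨hb, hzb⟩
    have h1 := hC.2.2 (-((2 * ⟪x, b⟫) / ⟪b, b⟫)) (by
      rw [neg_nonneg]
      exact div_nonpos_of_nonpos_of_nonneg (by linarith) real_inner_self_nonneg) b hbC
    have := hC.add ih h1
    rw [rs_apply]
    convert this using 1
    module

lemma rs_mem_weyl {R : Finset V} {b : V} (hb : b ∈ R) : rs b ∈ WeylGrp R :=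
  Subgroup.subset_closure ⟨b, hb, rs_apply b⟩

lemma Bruhat.exists_weyl {R : Finset V} {z u v : V} (h : Bruhat R z u v) :
    ∃ w ∈ WeylGrp R, v = w u := by
  induction h with
  | refl => exact ⟨1, one_mem _, rfl⟩
  | tail _ hs ih =>
    obtain ⟨w, hw, rfl⟩ := ih
    obtain ⟨b, hb, -, -, rfl⟩ := hs
    exact ⟨rs b * w, mul_mem (rs_mem_weyl hb) hw, rfl⟩

namespace SimpleSystem

variable {R : Finset V} {z : V} {n : ℕ} {α ϖ : Fin n → V}

lemma neg_mem (h : SimpleSystem R z α ϖ) {b : V} (hb : b ∈ R) : -b ∈ R := by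
  rw [← rs_self]; exact h.refl b hb b hb

lemma dual_nonneg (h : SimpleSystem R z α ϖ) {b : V} (hb : b ∈ R) (hp : 0 < ⟪z, b⟫) (j : Fin n) :
    0 ≤ ⟪ϖ j, b⟫ := by
  obtain ⟨c, hc, rfl⟩ := h.comb b hb hp
  rw [inner_sum]
  refine Finset.sum_nonneg fun i _ => ?_
  rw [inner_smul_right]
  refine mul_nonneg (hc i) ?_
  by_cases hij : j = i
  · subst hij; exact (h.dual_pos j).le
  · rw [h.dual_zero _ _ hij]

/-- A simple reflection permutes the positive roots other than its own simple root. -/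
lemma rs_pos (h : SimpleSystem R z α ϖ) {b : V} (hb : b ∈ R) (hp : 0 < ⟪z, b⟫) (i : Fin n)
    (hne : b ≠ α i) : 0 < ⟪z, rs (α i) b⟫ := by
  by_contra hcon
  have hmem := h.refl _ (h.mem i) _ hb
  have hneg : 0 < ⟪z, -(rs (α i) b)⟫ := by
    rw [inner_neg_right]
    have := h.reg _ hmem
    have := lt_of_le_of_ne (not_lt.1 hcon) this
    linarith
  -- both `b` and `-(rs (α i) b)` have nonnegative, but opposite, coefficients away from `i`
  have hz : ∀ j, j ≠ i → ⟪ϖ j, b⟫ = 0 := by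
    intro j hj
    have h1 := h.dual_nonneg hb hp j
    have h2 := h.dual_nonneg (h.neg_mem hmem) hneg j
    rw [rs_apply, inner_neg_right, inner_sub_right, inner_smul_right, h.dual_zero j i hj] at h2
    linarith
  obtain ⟨c, hc, hbc⟩ := h.comb b hb hp
  have hc0 : ∀ j, j ≠ i → c j = 0 := by
    intro j hj
    have h1 := hz j hj
    rw [hbc, inner_sum, Finset.sum_eq_single j] at h1
    · rw [inner_smul_right] at h1
      exact (mul_eq_zero.1 h1).resolve_right (h.dual_pos j).ne'
    · intro k _ hk
      rw [inner_smul_right, h.dual_zero _ _ hk.symm, mul_zero]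
    · simp
  have hbi : b = c i • α i := by
    rw [hbc, Finset.sum_eq_single i]
    · intro k _ hk; rw [hc0 k hk, zero_smul]
    · simp
  rcases h.red _ (h.mem i) (c i) (hbi ▸ hb) with h1 | h1
  · exact hne (by rw [hbi, h1, one_smul])
  · have := hc i; rw [h1] at this; linarith

/-! ### Words in the simple reflections -/

/-- The product of the simple reflections indexed by the letters of a word. -/
noncomputable def wordProd (α : Fin n → V) (l : List (Fin n)) : V ≃ₗᵢ[ℝ] V := (l.map fun i => rs (α i)).prod

lemma wordProd_mem (h : SimpleSystem R z α ϖ) (l : List (Fin n)) : wordProd α l ∈ WeylGrp R := by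
  refine Subgroup.list_prod_mem _ fun x hx => ?_
  obtain ⟨i, -, rfl⟩ := List.mem_map.1 hx
  exact rs_mem_weyl (h.mem i)

lemma weyl_map_mem (h : SimpleSystem R z α ϖ) {w : V ≃ₗᵢ[ℝ] V} (hw : w ∈ WeylGrp R) :
    ∀ b ∈ R, w b ∈ R := by
  induction hw using Subgroup.closure_induction'' with
  | one => intro b hb; exact hb
  | mem s hs =>
    obtain ⟨a, ha, hs⟩ := hs
    intro b hb; rw [hs, ← rs_apply]; exact h.refl a ha b hb
  | inv_mem s hs =>
    obtain ⟨a, ha, hs⟩ := hs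
    have : s = rs a := by ext x; rw [hs, rs_apply]
    intro b hb
    rw [this, inv_eq_of_mul_eq_one_right (rs_mul_self a)]; exact h.refl a ha b hb
  | mul x y _ _ hx hy => intro b hb; exact hx _ (hy b hb)

/-- Exchange: a word whose product makes `α k` negative absorbs the reflection in `α k`. -/
lemma exchange (h : SimpleSystem R z α ϖ) (k : Fin n) (l : List (Fin n))
    (hl : ⟪z, wordProd α l (α k)⟫ < 0) :
    ∃ l' : List (Fin n), l'.length < l.length ∧ wordProd α l * rs (α k) = wordProd α l' := by
  induction l with
  | nil => exact absurd hl (not_lt.2 (h.pos k).le)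
  | cons j t ih =>
    have hcons : ∀ t, wordProd α (j :: t) = rs (α j) * wordProd α t := fun t => by
      simp [wordProd]
    by_cases ht : ⟪z, wordProd α t (α k)⟫ < 0
    · obtain ⟨t', hlen, ht'⟩ := ih ht
      exact ⟨j :: t', by simpa using hlen, by rw [hcons, hcons, mul_assoc, ht']⟩
    · have hm := h.weyl_map_mem (h.wordProd_mem t) _ (h.mem k)
      have hp := lt_of_le_of_ne (not_lt.1 ht) (h.reg _ hm).symm
      have heq : wordProd α t (α k) = α j := by
        by_contra hne
        have := h.rs_pos hm hp j hne
        rw [hcons] at hl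
        exact lt_asymm this hl
      refine ⟨t, by simp, ?_⟩
      ext x
      have := rs_map (wordProd α t) (α k) x
      rw [hcons]
      simp only [LinearIsometryEquiv.coe_mul, Function.comp_apply]
      rw [← this, heq, rs_rs]

/-- Reflections in positive roots are products of simple ones: a simple root pairing positively
with `b` lowers `b` while keeping it positive, unless it is `b` itself. -/
lemma rs_pos_root (h : SimpleSystem R z α ϖ) (b : V) (hb : b ∈ R) (hp : 0 < ⟪z, b⟫) :
    rs b ∈ Subgroup.closure (Set.range fun i => rs (α i)) := by
  have key : ∀ (m : ℕ) (b : V), b ∈ R → 0 < ⟪z, b⟫ →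
      (R.filter fun c => ⟪z, c⟫ < ⟪z, b⟫).card < m →
      rs b ∈ Subgroup.closure (Set.range fun i => rs (α i)) := by
    intro m
    induction m with
    | zero => intro b _ _ hm; omega
    | succ m ih =>
      intro b hb hp hm
      have hb0 : b ≠ 0 := by rintro rfl; simp at hp
      obtain ⟨c, hc, hbc⟩ := h.comb b hb hp
      obtain ⟨i, hi⟩ : ∃ i, 0 < ⟪b, α i⟫ := by
        by_contra! hcon
        have h1 : 0 < ⟪b, b⟫ := real_inner_self_pos.2 hb0
        have h2 : ⟪b, b⟫ ≤ 0 := by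
          conv_lhs => rw [hbc]
          rw [← hbc, hbc, inner_sum, ← hbc]
          exact Finset.sum_nonpos fun i _ => by
            rw [inner_smul_right]; exact mul_nonpos_of_nonneg_of_nonpos (hc i) (hcon i)
        linarith
      by_cases hbi : b = α i
      · rw [hbi]; exact Subgroup.subset_closure ⟨i, rfl⟩
      · have hmem := h.refl _ (h.mem i) _ hb
        have hpos := h.rs_pos hb hp i hbi
        have hlt : ⟪z, rs (α i) b⟫ < ⟪z, b⟫ := by
          rw [rs_apply, inner_sub_right, inner_smul_right]
          have h1 : 0 < ⟪α i, α i⟫ := real_inner_self_pos.2 (by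
            intro h0; have := h.pos i; simp [h0] at this)
          have h2 := h.pos i
          have : 0 < 2 * ⟪b, α i⟫ / ⟪α i, α i⟫ * ⟪z, α i⟫ := by positivity
          linarith
        have hcard : (R.filter fun c => ⟪z, c⟫ < ⟪z, rs (α i) b⟫).card <
            (R.filter fun c => ⟪z, c⟫ < ⟪z, b⟫).card := by
          refine Finset.card_lt_card ((Finset.ssubset_iff_of_subset ?_).2
            ⟨rs (α i) b, by simp [hmem, hlt], by simp⟩)
          intro c hc
          simp only [Finset.mem_filter] at hc ⊢
          exact ⟨hc.1, hc.2.trans hlt⟩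
        have h1 := ih _ hmem hpos (by omega)
        have hs : rs (α i) ∈ Subgroup.closure (Set.range fun i => rs (α i)) :=
          Subgroup.subset_closure ⟨i, rfl⟩
        have : rs b = rs (α i) * rs (rs (α i) b) * rs (α i) := by
          ext x
          simp only [LinearIsometryEquiv.coe_mul, Function.comp_apply]
          rw [rs_map, rs_rs]
        rw [this]
        exact mul_mem (mul_mem hs h1) hs
  exact key _ b hb hp (Nat.lt_succ_self _)

lemma exists_word (h : SimpleSystem R z α ϖ) {w : V ≃ₗᵢ[ℝ] V} (hw : w ∈ WeylGrp R) :
    ∃ l, w = wordProd α l := by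
  have hle : WeylGrp R ≤ Subgroup.closure (Set.range fun i => rs (α i)) := by
    refine (Subgroup.closure_le _).2 ?_
    rintro s ⟨b, hb, hs⟩
    obtain rfl : s = rs b := by ext x; rw [hs, rs_apply]
    rcases lt_or_gt_of_ne (h.reg b hb) with hlt | hgt
    · rw [← rs_neg]
      exact h.rs_pos_root _ (h.neg_mem hb) (by rw [inner_neg_right]; linarith)
    · exact h.rs_pos_root _ hb hgt
  replace hw := hle hw
  induction hw using Subgroup.closure_induction'' with
  | one => exact ⟨[], rfl⟩
  | mem s hs => obtain ⟨i, rfl⟩ := hs; exact ⟨[i], by simp [wordProd]⟩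
  | inv_mem s hs =>
    obtain ⟨i, rfl⟩ := hs
    exact ⟨[i], by simp [wordProd, inv_eq_of_mul_eq_one_right (rs_mul_self (α i))]⟩
  | mul x y _ _ ihx ihy =>
    obtain ⟨l, rfl⟩ := ihx
    obtain ⟨l', rfl⟩ := ihy
    exact ⟨l ++ l', by simp [wordProd]⟩

/-- Induction along length-increasing right multiplications by simple reflections. -/
lemma weyl_induction (h : SimpleSystem R z α ϖ) (P : (V ≃ₗᵢ[ℝ] V) → Prop) (h1 : P 1)
    (hs : ∀ w ∈ WeylGrp R, ∀ i, P w → 0 < ⟪z, w (α i)⟫ → P (w * rs (α i)))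
    {w : V ≃ₗᵢ[ℝ] V} (hw : w ∈ WeylGrp R) : P w := by
  have key : ∀ (m : ℕ) (l : List (Fin n)), l.length < m → P (wordProd α l) := by
    intro m
    induction m with
    | zero => intro l hl; omega
    | succ m ih =>
      intro l hl
      rcases List.eq_nil_or_concat l with rfl | ⟨t, k, rfl⟩
      · exact h1
      · have hc : wordProd α (t.concat k) = wordProd α t * rs (α k) := by simp [wordProd]
        rw [List.length_concat] at hl
        rw [hc]
        rcases lt_or_gt_of_ne (h.reg _ (h.weyl_map_mem (h.wordProd_mem t) _ (h.mem k)))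
          with hlt | hgt
        · obtain ⟨l', hl', he⟩ := h.exchange k t hlt
          rw [he]; exact ih _ (by omega)
        · exact hs _ (h.wordProd_mem t) k (ih t (by omega)) hgt
  obtain ⟨l, rfl⟩ := h.exists_word hw
  exact key _ l (Nat.lt_succ_self _)

/-! ### Lifting in the Bruhat order -/

/-- A simple reflection carries a Bruhat step to a Bruhat step, unless the step is the reflection
itself. -/
lemma bstep_rs (h : SimpleSystem R z α ϖ) (i : Fin n) {x y : V} (hs : BStep R z x y) :
    y = rs (α i) x ∨ BStep R z (rs (α i) x) (rs (α i) y) := by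
  obtain ⟨b, hb, hp, hx, rfl⟩ := hs
  by_cases hbi : b = α i
  · left; rw [hbi]
  · right
    refine ⟨rs (α i) b, h.refl _ (h.mem i) _ hb, h.rs_pos hb hp i hbi, ?_, (rs_map _ _ _).symm⟩
    rwa [LinearIsometryEquiv.inner_map_map]

/-- The upper Bruhat interval of `u` is stable under the simple reflections that raise `u`. -/
lemma bruhat_rs_right (h : SimpleSystem R z α ϖ) (i : Fin n) {u v : V} (huv : Bruhat R z u v)
    (hu : ⟪u, α i⟫ ≤ 0) : Bruhat R z u (rs (α i) v) := by
  induction huv with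
  | refl => exact Relation.ReflTransGen.single ⟨α i, h.mem i, h.pos i, hu, rfl⟩
  | tail hxy hs ih =>
    rcases h.bstep_rs i hs with rfl | hsx
    · rw [rs_rs]; exact hxy
    · exact ih.tail hsx

/-- Lifting: if the simple reflection raises `v`, then applying it to both sides of `u ≤ v`
preserves the relation. -/
lemma bruhat_rs_rs (h : SimpleSystem R z α ϖ) (i : Fin n) {u v : V} (huv : Bruhat R z u v)
    (hv : ⟪v, α i⟫ ≤ 0) : Bruhat R z (rs (α i) u) (rs (α i) v) := by
  have hstep : BStep R z v (rs (α i) v) := ⟨α i, h.mem i, h.pos i, hv, rfl⟩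
  have key : Bruhat R z u (rs (α i) v) ∧ Bruhat R z (rs (α i) u) (rs (α i) v) := by
    induction huv using Relation.ReflTransGen.head_induction_on with
    | refl => exact ⟨Relation.ReflTransGen.single hstep, Relation.ReflTransGen.refl⟩
    | head hs _ ih =>
      refine ⟨ih.1.head hs, ?_⟩
      rcases h.bstep_rs i hs with rfl | hsx
      · exact ih.1
      · exact ih.2.head hsx
  exact key.2

/-! ### Extrema of Weyl translates of upper Bruhat intervals -/

/-- For every `w` in the Weyl group, the upper Bruhat interval of `u` has an element whose image
under `w` is least for the order defined by the positive cone. -/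
lemma exists_min (h : SimpleSystem R z α ϖ) {w : V ≃ₗᵢ[ℝ] V} (hw : w ∈ WeylGrp R) :
    ∀ u, ∃ m, Bruhat R z u m ∧
      ∀ v, Bruhat R z u v → w v - w m ∈ coneGen {b : V | b ∈ R ∧ 0 < ⟪z, b⟫} := by
  refine h.weyl_induction (fun w => ∀ u, ∃ m, Bruhat R z u m ∧
      ∀ v, Bruhat R z u v → w v - w m ∈ coneGen {b : V | b ∈ R ∧ 0 < ⟪z, b⟫}) ?_ ?_ hw
  · intro u
    exact ⟨u, Relation.ReflTransGen.refl, fun v hv => hv.sub_mem⟩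
  · intro w _ i ih hp u
    rcases le_or_gt ⟪u, α i⟫ 0 with hu | hu
    · obtain ⟨m, hm, hmin⟩ := ih u
      refine ⟨rs (α i) m, h.bruhat_rs_right i hm hu, fun v hv => ?_⟩
      simp only [LinearIsometryEquiv.coe_mul, Function.comp_apply, rs_rs]
      exact hmin _ (h.bruhat_rs_right i hv hu)
    · -- the least element of the larger, `rs (α i)`-stable interval above `rs (α i) u` is used
      obtain ⟨m, hm, hmin⟩ := ih (rs (α i) u)
      have hu' : ⟪rs (α i) u, α i⟫ ≤ 0 := by rw [rs_inner]; linarith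
      have hmi : ⟪m, α i⟫ ≤ 0 := by
        by_contra! hcon
        have hC := hmin _ (h.bruhat_rs_right i hm hu')
        have hai : 0 < ⟪α i, α i⟫ := real_inner_self_pos.2 (by
          intro h0; have := h.pos i; simp [h0] at this)
        have heq : w (rs (α i) m) - w m = -((2 * ⟪m, α i⟫ / ⟪α i, α i⟫) • w (α i)) := by
          rw [rs_apply, map_sub, map_smul]; abel
        have hlt : ⟪z, w (rs (α i) m) - w m⟫ < 0 := by
          rw [heq, inner_neg_right, inner_smul_right]
          have : 0 < 2 * ⟪m, α i⟫ / ⟪α i, α i⟫ * ⟪z, w (α i)⟫ := by positivity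
          linarith
        rcases coneGen_pos hC with h0 | h0
        · rw [h0] at hlt; simp at hlt
        · linarith
      refine ⟨rs (α i) m, by simpa [rs_rs] using h.bruhat_rs_rs i hm hmi, fun v hv => ?_⟩
      simp only [LinearIsometryEquiv.coe_mul, Function.comp_apply, rs_rs]
      refine hmin _ (h.bruhat_rs_right i ?_ hu')
      exact Relation.ReflTransGen.head
        ⟨α i, h.mem i, h.pos i, hu', (rs_rs _ _).symm⟩ hv

/-- Every Weyl translate of the upper Bruhat interval of `u` meets the region below `u`. -/
lemma exists_le (h : SimpleSystem R z α ϖ) {w : V ≃ₗᵢ[ℝ] V} (hw : w ∈ WeylGrp R) (u : V) :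
    ∃ v, Bruhat R z u v ∧ u - w v ∈ coneGen {b : V | b ∈ R ∧ 0 < ⟪z, b⟫} := by
  have hC := isConvexCone_coneGen {b : V | b ∈ R ∧ 0 < ⟪z, b⟫}
  refine h.weyl_induction (fun w => ∃ v, Bruhat R z u v ∧
    u - w v ∈ coneGen {b : V | b ∈ R ∧ 0 < ⟪z, b⟫}) ?_ ?_ hw
  · exact ⟨u, Relation.ReflTransGen.refl, by simpa using hC.1⟩
  · rintro w hw i ⟨v, hv, hle⟩ hp
    rcases le_or_gt ⟪v, α i⟫ 0 with hvi | hvi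
    · refine ⟨rs (α i) v, hv.tail ⟨α i, h.mem i, h.pos i, hvi, rfl⟩, ?_⟩
      simpa only [LinearIsometryEquiv.coe_mul, Function.comp_apply, rs_rs] using hle
    · refine ⟨v, hv, ?_⟩
      have hmem : w (α i) ∈ coneGen {b : V | b ∈ R ∧ 0 < ⟪z, b⟫} :=
        fun C hC => hC.2 ⟨h.weyl_map_mem hw _ (h.mem i), hp⟩
      have h1 := hC.2.2 (2 * ⟪v, α i⟫ / ⟪α i, α i⟫)
        (div_nonneg (by linarith) real_inner_self_nonneg) _ hmem
      have := hC.add hle h1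
      convert this using 1
      simp only [LinearIsometryEquiv.coe_mul, Function.comp_apply]
      rw [rs_apply, map_sub, map_smul]; abel

end SimpleSystem

/-! ### Indecomposable roots, and triangular families -/

/-- Every positive root is a nonnegative combination of the indecomposable positive roots. -/
lemma comb_of_indecomposable {R : Finset V} {z : V} {n : ℕ} {α : Fin n → V}
    (hsimple : ∀ b : V,
      (b ∈ R ∧ 0 < ⟪z, b⟫ ∧
        ¬∃ c ∈ R, ∃ d ∈ R, 0 < ⟪z, c⟫ ∧ 0 < ⟪z, d⟫ ∧ b = c + d) ↔ ∃ i, α i = b) :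
    ∀ b ∈ R, 0 < ⟪z, b⟫ → ∃ c : Fin n → ℝ, (∀ i, 0 ≤ c i) ∧ b = ∑ i, c i • α i := by
  have key : ∀ (m : ℕ) (b : V), b ∈ R → 0 < ⟪z, b⟫ →
      (R.filter fun c => ⟪z, c⟫ < ⟪z, b⟫).card < m →
      ∃ c : Fin n → ℝ, (∀ i, 0 ≤ c i) ∧ b = ∑ i, c i • α i := by
    intro m
    induction m with
    | zero => intro b _ _ hm; omega
    | succ m ih =>
      intro b hb hp hm
      by_cases hd : ∃ c ∈ R, ∃ d ∈ R, 0 < ⟪z, c⟫ ∧ 0 < ⟪z, d⟫ ∧ b = c + d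
      · obtain ⟨c, hc, d, hd, hcp, hdp, rfl⟩ := hd
        have hcard : ∀ e ∈ R, ⟪z, e⟫ < ⟪z, c + d⟫ →
            (R.filter fun x => ⟪z, x⟫ < ⟪z, e⟫).card < m := by
          intro e he hlt
          have : (R.filter fun x => ⟪z, x⟫ < ⟪z, e⟫).card <
              (R.filter fun x => ⟪z, x⟫ < ⟪z, c + d⟫).card := by
            refine Finset.card_lt_card ((Finset.ssubset_iff_of_subset ?_).2
              ⟨e, by simp only [Finset.mem_filter]; exact ⟨he, hlt⟩, by simp⟩)
            intro x hx
            simp only [Finset.mem_filter] at hx ⊢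
            exact ⟨hx.1, hx.2.trans hlt⟩
          omega
        obtain ⟨p, hp0, hp⟩ := ih c hc hcp (hcard c hc (by rw [inner_add_right]; linarith))
        obtain ⟨q, hq0, hq⟩ := ih d hd hdp (hcard d hd (by rw [inner_add_right]; linarith))
        refine ⟨p + q, fun i => add_nonneg (hp0 i) (hq0 i), ?_⟩
        conv_lhs => rw [hp, hq]
        simp [add_smul, Finset.sum_add_distrib]
      · obtain ⟨i, rfl⟩ := (hsimple b).1 ⟨hb, hp, hd⟩
        refine ⟨Pi.single i 1, fun j => ?_, ?_⟩
        · by_cases hj : j = i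
          · subst hj; simp
          · simp [hj]
        · rw [Finset.sum_eq_single i]
          · simp
          · intro j _ hj; simp [hj]
          · simp
  intro b hb hp
  exact key _ b hb hp (Nat.lt_succ_self _)

/-- A family indexed by a finite set and triangular, with nonzero diagonal, for a real-valued
height function spans the space of all functions. -/
lemma span_eq_top_of_triangular {ι : Type*} [Finite ι] (ht : ι → ℝ) (S : Submodule ℚ (ι → ℚ))
    (F : ι → ι → ℚ) (hF : ∀ u, F u ∈ S) (hdiag : ∀ u, F u u ≠ 0)
    (htri : ∀ u x, F u x ≠ 0 → x = u ∨ ht x < ht u) : S = ⊤ := by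
  classical
  have := Fintype.ofFinite ι
  have hsum : ∀ f : ι → ℚ, f = ∑ x, f x • (Pi.single x 1 : ι → ℚ) := by
    intro f; ext y; simp [Finset.sum_apply, Pi.single_apply]
  have hwf : WellFounded (fun x y : ι => ht x < ht y) :=
    (Finite.wellFounded_of_trans_of_irrefl (r := fun x y : ι => ht x < ht y))
  have key : ∀ u, (Pi.single u 1 : ι → ℚ) ∈ S := by
    intro u
    induction u using hwf.induction with
    | _ u ih =>
      have h1 := hsum (F u)
      rw [← Finset.add_sum_erase _ _ (Finset.mem_univ u)] at h1
      have h2 : ∑ x ∈ Finset.univ.erase u, F u x • (Pi.single x 1 : ι → ℚ) ∈ S := by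
        refine S.sum_mem fun x hx => ?_
        by_cases h0 : F u x = 0
        · rw [h0, zero_smul]; exact S.zero_mem
        · exact S.smul_mem _ (ih x ((htri u x h0).resolve_left (Finset.ne_of_mem_erase hx)))
      have h3 : F u u • (Pi.single u 1 : ι → ℚ) ∈ S := by
        have := S.sub_mem (hF u) h2
        rwa [sub_eq_of_eq_add h1] at this
      exact (S.smul_mem_iff (hdiag u)).1 h3
  rw [eq_top_iff]
  intro f _
  rw [hsum f]
  exact S.sum_mem fun x _ => S.smul_mem _ (key x)

/-- the values of the `𝒢`-invariant on Coxeter matroids of type `(Φ, I)` span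
`ℚ^{W·δ_I}`; consequently for any valuative invariant `g` there is at most one `ℚ`-linear map
`ψ` with `ψ ∘ 𝒢 = g`. -/
theorem G_invariant_spans {A : Type*} [AddCommGroup A] [Module ℚ A]
    (R : Finset V) (h0 : (0 : V) ∉ R)
    (hspan : Submodule.span ℝ (R : Set V) = ⊤)
    (hrefl : ∀ a ∈ R, ∀ b ∈ R, b - ((2 * ⟪b, a⟫) / ⟪a, a⟫) • a ∈ R)
    (hred : ∀ a ∈ R, ∀ c : ℝ, c • a ∈ (R : Set V) → c = 1 ∨ c = -1)
    (hWfin : (WeylGrp R : Set (V ≃ₗᵢ[ℝ] V)).Finite)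
    (n : ℕ) (hn : n = Module.finrank ℝ V)
    (z : V) (hz : ∀ b ∈ R, ⟪z, b⟫ ≠ 0)
    (α : Fin n → V) (hαinj : Function.Injective α)
    (hsimple : ∀ b : V,
      (b ∈ R ∧ 0 < ⟪z, b⟫ ∧
        ¬∃ c ∈ R, ∃ d ∈ R, 0 < ⟪z, c⟫ ∧ 0 < ⟪z, d⟫ ∧ b = c + d) ↔ ∃ i, α i = b)
    (ϖ : Fin n → V)
    (hϖ : ∀ i j, ⟪ϖ i, (2 / ⟪α j, α j⟫) • α j⟫ = if i = j then (1 : ℝ) else 0)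
    (I : Finset (Fin n)) (δI : V) (hδ : δI = ∑ i ∈ Finset.univ \ I, ϖ i)
    (Cpos : Set V) (hCpos : Cpos = coneGen {b : V | b ∈ R ∧ 0 < ⟪z, b⟫})
    (OrbS : Set V) (hOrb : OrbS = {u : V | ∃ w ∈ WeylGrp R, u = w δI})
    (Mat : Set (Set V)) (hMat : ∀ M : Set V, M ∈ Mat ↔
      (M.Nonempty ∧ M ⊆ OrbS ∧
        ∀ w ∈ WeylGrp R, ∃ b ∈ M, convexHull ℝ M ⊆ transl b (⇑w '' Cpos)))
    (mn : Set V → (V ≃ₗᵢ[ℝ] V) → V)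
    (hmn : ∀ M ∈ Mat, ∀ w ∈ WeylGrp R,
      mn M w ∈ M ∧ convexHull ℝ M ⊆ transl (mn M w) (⇑w '' Cpos))
    (G : Set V → (↥OrbS → ℚ))
    (hG : ∀ (M : Set V) (u : ↥OrbS),
      G M u = ∑ w ∈ hWfin.toFinset, ivq (w⁻¹ (mn M w) = u.1)) :
    Submodule.span ℚ {x : ↥OrbS → ℚ | ∃ M ∈ Mat, x = G M} = ⊤ ∧
    ∀ g : Set V → A,
      (∀ (k : ℕ) (a : Fin k → ℤ) (M : Fin k → Set V), (∀ i, M i ∈ Mat) →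
        (∑ i, a i • indic (convexHull ℝ (M i))) = 0 → (∑ i, a i • g (M i)) = 0) →
      (∀ w ∈ WeylGrp R, ∀ M ∈ Mat, g (⇑w '' M) = g M) →
      ∀ ψ ψ' : (↥OrbS → ℚ) →ₗ[ℚ] A,
        (∀ M ∈ Mat, ψ (G M) = g M) → (∀ M ∈ Mat, ψ' (G M) = g M) → ψ = ψ' := by
  have h : SimpleSystem R z α ϖ := by
    have hα : ∀ i, α i ∈ R ∧ 0 < ⟪z, α i⟫ := fun i =>
      ⟨((hsimple _).2 ⟨i, rfl⟩).1, ((hsimple _).2 ⟨i, rfl⟩).2.1⟩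
    have hαα : ∀ i, 0 < ⟪α i, α i⟫ := fun i =>
      real_inner_self_pos.2 fun h => h0 (h ▸ (hα i).1)
    refine ⟨fun a ha b hb => by rw [rs_apply]; exact hrefl a ha b hb, fun a ha c hc =>
      hred a ha c hc, hz, fun i => (hα i).1, fun i => (hα i).2, comb_of_indecomposable hsimple,
      fun i j hij => ?_, fun i => ?_⟩
    · have := hϖ i j
      rw [if_neg hij, inner_smul_right] at this
      exact (mul_eq_zero.1 this).resolve_left (div_pos two_pos (hαα j)).ne'
    · have := hϖ i i
      rw [if_pos rfl, inner_smul_right] at this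
      exact pos_of_mul_pos_right (this ▸ one_pos) (div_pos two_pos (hαα i)).le
  have hC : IsConvexCone Cpos := hCpos ▸ isConvexCone_coneGen _
  have hmem_transl : ∀ (w : V ≃ₗᵢ[ℝ] V) (x b : V),
      x ∈ transl b (⇑w '' Cpos) ↔ w⁻¹ x - w⁻¹ b ∈ Cpos := by
    intro w x b
    constructor
    · rintro ⟨_, ⟨c, hc, rfl⟩, rfl⟩
      have : w⁻¹ (b + w c) - w⁻¹ b = c := by
        rw [map_add, add_sub_cancel_left]; exact w.symm_apply_apply c
      change w⁻¹ (b + w c) - w⁻¹ b ∈ Cpos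
      rwa [this]
    · intro hx
      refine ⟨w (w⁻¹ x - w⁻¹ b), ⟨_, hx, rfl⟩, ?_⟩
      have : ∀ y, w (w⁻¹ y) = y := fun y => w.apply_symm_apply y
      simp only [map_sub, this, add_sub_cancel]
  -- the upper Bruhat intervals are Coxeter matroids
  have hMu : ∀ u ∈ OrbS, {v | Bruhat R z u v} ∈ Mat := by
    intro u hu
    rw [hMat]
    refine ⟨⟨u, Relation.ReflTransGen.refl⟩, ?_, ?_⟩
    · intro v hv
      obtain ⟨w, hw, rfl⟩ := Bruhat.exists_weyl hv
      rw [hOrb] at hu ⊢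
      obtain ⟨w', hw', rfl⟩ := hu
      exact ⟨w * w', mul_mem hw hw', rfl⟩
    · intro w hw
      obtain ⟨m, hm, hmin⟩ := h.exists_min (inv_mem hw) u
      refine ⟨m, hm, convexHull_min (fun v hv => ?_) ?_⟩
      · rw [hmem_transl, hCpos]; exact hmin v hv
      · exact (hC.2.1.linear_image w.toLinearEquiv.toLinearMap).translate m
  have hspan' : Submodule.span ℚ {x : ↥OrbS → ℚ | ∃ M ∈ Mat, x = G M} = ⊤ := by
    have hfin : Finite ↥OrbS := by
      refine Set.Finite.to_subtype ((hWfin.image fun w => w δI).subset ?_)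
      rw [hOrb]
      rintro u ⟨w, hw, rfl⟩
      exact ⟨w, hw, rfl⟩
    -- translated minima of the interval above `u` lie below `u`
    have hle : ∀ u ∈ OrbS, ∀ w ∈ WeylGrp R, u - w⁻¹ (mn {v | Bruhat R z u v} w) ∈ Cpos := by
      intro u hu w hw
      obtain ⟨v, hv, hvu⟩ := h.exists_le (inv_mem hw) u
      have h1 := (hmem_transl _ _ _).1
        ((hmn _ (hMu u hu) w hw).2 (subset_convexHull ℝ _ hv))
      rw [← hCpos] at hvu
      simpa using hC.add hvu h1
    have hanti : ∀ x y : V, x - y ∈ Cpos → y = x ∨ ⟪z, y⟫ < ⟪z, x⟫ := by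
      intro x y hxy
      rw [hCpos] at hxy
      rcases coneGen_pos hxy with h1 | h1
      · exact Or.inl (sub_eq_zero.1 h1).symm
      · rw [inner_sub_right] at h1; exact Or.inr (by linarith)
    refine span_eq_top_of_triangular (fun x : ↥OrbS => ⟪z, x.1⟫) _
      (fun u => G {v | Bruhat R z u.1 v})
      (fun u => Submodule.subset_span ⟨_, hMu u.1 u.2, rfl⟩) ?_ ?_
    · intro u
      rw [hG]
      refine (Finset.sum_pos' (fun w _ => ?_) ⟨1, ?_, ?_⟩).ne'
      · unfold ivq; split_ifs <;> norm_num
      · simp [one_mem]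
      · have h1 := (hmn _ (hMu u.1 u.2) 1 (one_mem _)).1
        have h2 := hle u.1 u.2 1 (one_mem _)
        have h3 : mn {v | Bruhat R z u.1 v} 1 = u.1 := by
          have h4 := Bruhat.sub_mem h1
          rw [← hCpos] at h4
          rcases hanti _ _ h4 with h5 | h5
          · exact h5.symm
          · rcases hanti _ _ h2 with h6 | h6
            · exact h6
            · exact absurd h6 (not_lt.2 (by simpa using h5.le))
        have h5 : (1 : V ≃ₗᵢ[ℝ] V)⁻¹ (mn {v | Bruhat R z u.1 v} 1) = u.1 := by
          rw [h3]; simp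
        unfold ivq
        rw [if_pos h5]; norm_num
    · intro u x hx
      rw [hG] at hx
      obtain ⟨w, hw, hne⟩ := Finset.exists_ne_zero_of_sum_ne_zero hx
      have hwx : w⁻¹ (mn {v | Bruhat R z u.1 v} w) = x.1 := by
        by_contra hcon
        exact hne (by unfold ivq; rw [if_neg hcon])
      have h1 := hle u.1 u.2 w (by simpa using hw)
      rw [hwx] at h1
      exact (hanti _ _ h1).imp_left Subtype.ext
  refine ⟨hspan', fun g _ _ ψ ψ' hψ hψ' => ?_⟩
  refine LinearMap.ext_on hspan' ?_
  rintro _ ⟨M, hM, rfl⟩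
  rw [hψ M hM, hψ' M hM]
end

section
/- Let Q be a polytope in V. Then 1_Q = ∑_F (−1)^{dim F}·1_{C_F(Q) + F}, where the sum is over all faces F of Q, dim F is the dimension of the affine hull of F, and C_F(Q) + F denotes the Minkowski sum of the tangent cone C_F(Q) with F. -/
/-!
The proof rests on the Euler characteristic of integer combinations of indicator functions of
compact convex sets (`HasChi`): the combination `∑ aᵢ 1_{Kᵢ}` with all `Kᵢ` nonempty gets the value
`∑ aᵢ`. Slicing by a linear functional (`HasChi.slice`) reduces its properties to the line, where it
is the sum of the right jumps `g(t) - g(t+)` (`HasChi.jumps`). By induction on the dimension, a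
nonempty relatively open convex set of dimension `d` has Euler characteristic `(-1) ^ d`
(`HasChi.relOpen`); the case of the empty set gives well-definedness (`HasChi.unique`).

Let `Q` be the set of solutions of finitely many inequalities. Sorting the points of `Q` by their
sets `I` of active inequalities decomposes `Q` into cells, which are the relative interiors of the
faces, and for the face `F` of the cell `I` the set `C_F(Q) + F` is cut out by the inequalities in
`I` (`tanCone_add_flat`). Fix `x`, and let `J` be the set of inequalities violated at `x`. The faces
contributing at `x` are those whose `I` is disjoint from `J`, so the right-hand side at `x` is the
Euler characteristic of `Q' = {q ∈ Q | no inequality in J is active at q}`.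

If `x ∈ Q`, then `J = ∅` and `Q' = Q` has Euler characteristic `1`. If `x ∉ Q`, then `Q \ Q'` is the
part of the boundary visible from `x`. Central projection from `x` maps it bijectively onto the
projection of `Q`, which is compact and convex, so it has Euler characteristic `1` and `Q'` has
Euler characteristic `0` (`HasChi.invisible`).
-/

open RealInnerProductSpace Pointwise

variable {V : Type*} [NormedAddCommGroup V] [InnerProductSpace ℝ V] [FiniteDimensional ℝ V]

/-- A polytope: a bounded polyhedron. -/
def IsPolytope (P : Set V) : Prop := IsPolyhedron P ∧ Bornology.IsBounded P

open Filter Topology Module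

set_option linter.unusedSectionVars false

/-! ### The Euler characteristic on compact convex sets -/

/-- `HasChi A f c` says that `f` is an integer combination `∑ aᵢ 1_{Kᵢ}` of indicator functions of
nonempty compact convex sets `Kᵢ ⊆ A`, with `c = ∑ aᵢ`; thus `c` is the Euler characteristic of
`f`. That `c` is determined by `f` is `HasChi.unique`. -/
inductive HasChi {E : Type*} [AddCommGroup E] [Module ℝ E] [TopologicalSpace E] (A : Set E) :
    (E → ℤ) → ℤ → Prop
  | of (K : Set E) (hA : K ⊆ A) (hne : K.Nonempty) (hc : IsCompact K) (hK : Convex ℝ K) :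
      HasChi A (indic K) 1
  | zero : HasChi A 0 0
  | add {f g : E → ℤ} {c d : ℤ} : HasChi A f c → HasChi A g d → HasChi A (f + g) (c + d)
  | neg {f : E → ℤ} {c : ℤ} : HasChi A f c → HasChi A (-f) (-c)

/-- A convex set is relatively open when every segment in it can be prolonged a little beyond its
endpoints. In finite dimension this is the usual notion; no topology is needed here. -/
def RelOpen {E : Type*} [AddCommGroup E] [Module ℝ E] (C : Set E) : Prop :=
  Convex ℝ C ∧ ∀ x ∈ C, ∀ y ∈ C, ∃ ε : ℝ, 0 < ε ∧ x + ε • (x - y) ∈ C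

lemma indic_mem {E : Type*} {K : Set E} {x : E} (h : x ∈ K) : indic K x = 1 := by
  simp [indic, h]

lemma indic_not_mem {E : Type*} {K : Set E} {x : E} (h : x ∉ K) : indic K x = 0 := by
  simp [indic, h]

section General

variable {E : Type*} [AddCommGroup E] [Module ℝ E] [TopologicalSpace E]

lemma HasChi.congr {A : Set E} {f g : E → ℤ} {c d : ℤ} (h : HasChi A f c) (hf : f = g)
    (hc : c = d) : HasChi A g d := by
  subst hf hc; exact h

lemma HasChi.mono {A B : Set E} (hAB : A ⊆ B) {f : E → ℤ} {c : ℤ} (h : HasChi A f c) :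
    HasChi B f c := by
  induction h with
  | of K hA hne hc hK => exact .of K (hA.trans hAB) hne hc hK
  | zero => exact .zero
  | add _ _ h1 h2 => exact .add h1 h2
  | neg _ h => exact .neg h

lemma HasChi.sub {A : Set E} {f g : E → ℤ} {c d : ℤ} (h : HasChi A f c) (h' : HasChi A g d) :
    HasChi A (f - g) (c - d) := by
  rw [sub_eq_add_neg, sub_eq_add_neg]; exact h.add h'.neg

lemma HasChi.sum {ι : Type*} {A : Set E} (s : Finset ι) {f : ι → E → ℤ} {c : ι → ℤ}
    (h : ∀ i ∈ s, HasChi A (f i) (c i)) : HasChi A (∑ i ∈ s, f i) (∑ i ∈ s, c i) := by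
  classical
  induction s using Finset.induction_on with
  | empty => simpa using HasChi.zero
  | insert a s ha ih =>
    rw [Finset.sum_insert ha, Finset.sum_insert ha]
    exact (h a (by simp)).add (ih fun i hi => h i (by simp [hi]))

lemma HasChi.support {A : Set E} {f : E → ℤ} {c : ℤ} (h : HasChi A f c) {x : E} (hx : x ∉ A) :
    f x = 0 := by
  induction h with
  | of K hA hne hc hK => exact indic_not_mem fun h => hx (hA h)
  | zero => rfl
  | add _ _ h1 h2 => simp [h1, h2]
  | neg _ h => simp [h]

lemma HasChi.eq_apply {A : Set E} (hA : A.Subsingleton) {f : E → ℤ} {c : ℤ} (h : HasChi A f c)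
    {x : E} (hx : x ∈ A) : c = f x := by
  induction h with
  | of K hKA hne hc hK =>
    obtain ⟨k, hk⟩ := hne
    rw [hA hx (hKA hk), indic_mem hk]
  | zero => rfl
  | add _ _ h1 h2 => simp [h1, h2]
  | neg _ h => simp [h]

lemma HasChi.of_empty {A : Set E} (hA : A = ∅) {f : E → ℤ} {c : ℤ} (h : HasChi A f c) :
    c = 0 := by
  induction h with
  | of K hKA hne hc hK => exact absurd (hne.mono hKA) (by simp [hA])
  | zero => rfl
  | add _ _ h1 h2 => simp [h1, h2]
  | neg _ h => simp [h]

lemma HasChi.indic_of {K : Set E} (hc : IsCompact K) (hK : Convex ℝ K) :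
    ∃ c, HasChi K (indic K) c := by
  rcases K.eq_empty_or_nonempty with rfl | hne
  · exact ⟨0, HasChi.zero.congr (by ext; simp [indic]) rfl⟩
  · exact ⟨1, .of K subset_rfl hne hc hK⟩

lemma HasChi.inter [T2Space E] {A L : Set E} (hL : IsCompact L) (hL' : Convex ℝ L)
    {f : E → ℤ} {c : ℤ} (h : HasChi A f c) : ∃ d, HasChi (A ∩ L) (L.indicator f) d := by
  induction h with
  | of K hA hne hc hK =>
    obtain ⟨d, hd⟩ := HasChi.indic_of (hc.inter hL) (hK.inter hL')
    refine ⟨d, (hd.mono (Set.inter_subset_inter_left L hA)).congr ?_ rfl⟩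
    rw [Set.inter_comm]
    simp only [indic, Set.indicator_indicator]
  | zero => exact ⟨0, HasChi.zero.congr (by simp) rfl⟩
  | add _ _ h1 h2 =>
    obtain ⟨d1, h1⟩ := h1
    obtain ⟨d2, h2⟩ := h2
    exact ⟨_, (h1.add h2).congr (Set.indicator_add' L _ _).symm rfl⟩
  | neg _ h =>
    obtain ⟨d, h⟩ := h
    exact ⟨_, h.neg.congr (Set.indicator_neg' L _).symm rfl⟩

/-- A finite union of compact convex sets has an Euler characteristic, computed from subsets of
that union. -/
lemma HasChi.biUnion [T2Space E] {ι : Type*} (s : Finset ι) (L : ι → Set E)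
    (hc : ∀ i ∈ s, IsCompact (L i)) (hL : ∀ i ∈ s, Convex ℝ (L i)) :
    ∃ c, HasChi (⋃ i ∈ s, L i) (indic (⋃ i ∈ s, L i)) c := by
  classical
  induction s using Finset.induction_on with
  | empty => exact ⟨0, HasChi.zero.congr (by ext; simp [indic]) rfl⟩
  | insert a s ha ih =>
    obtain ⟨c, h⟩ := ih (fun i hi => hc i (by simp [hi])) (fun i hi => hL i (by simp [hi]))
    obtain ⟨d, hd⟩ := HasChi.indic_of (hc a (by simp)) (hL a (by simp))
    obtain ⟨e, he⟩ := h.inter (hc a (by simp)) (hL a (by simp))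
    rw [Finset.set_biUnion_insert]
    refine ⟨d + c - e, (((hd.mono Set.subset_union_left).add
      (h.mono Set.subset_union_right)).sub (he.mono ?_)).congr ?_ rfl⟩
    · exact Set.inter_subset_left.trans Set.subset_union_right
    · ext x
      by_cases h1 : x ∈ L a <;> by_cases h2 : x ∈ ⋃ i ∈ s, L i <;>
        simp only [indic, Set.indicator, Pi.add_apply, Pi.sub_apply, h1, h2, Set.mem_union] <;>
        simp

/-- Fubini: slicing by the level sets of a linear functional `l`, the Euler characteristic of `f`
is that of the function sending `t` to the Euler characteristic of the slice at `t`. -/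
lemma HasChi.slice [T2Space E] {A : Set E} (l : E →L[ℝ] ℝ) {f : E → ℤ} {c : ℤ}
    (h : HasChi A f c) : ∃ g : ℝ → ℤ, HasChi Set.univ g c ∧
      ∀ t, HasChi (A ∩ {x | l x = t}) ({x | l x = t}.indicator f) (g t) := by
  induction h with
  | of K hA hne hc hK =>
    refine ⟨indic (l '' K), .of _ (Set.subset_univ _) (hne.image _) (hc.image l.continuous)
      (hK.linear_image l.toLinearMap), fun t => ?_⟩
    have hcl : IsClosed {x | l x = t} := isClosed_eq l.continuous continuous_const
    have hcx : Convex ℝ {x | l x = t} := convex_hyperplane l.toLinearMap.isLinear t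
    have he : {x | l x = t}.indicator (indic K) = indic (K ∩ {x | l x = t}) := by
      rw [Set.inter_comm]; simp only [indic, Set.indicator_indicator]
    rw [he]
    by_cases ht : t ∈ l '' K
    · rw [indic_mem ht]
      obtain ⟨x, hx, hxt⟩ := ht
      exact .of _ (Set.inter_subset_inter_left _ hA) ⟨x, hx, hxt⟩ (hc.inter_right hcl)
        (hK.inter hcx)
    · rw [indic_not_mem ht]
      have : K ∩ {x | l x = t} = ∅ := by
        ext x; simp only [Set.mem_inter_iff, Set.mem_ofPred_eq, Set.mem_empty_iff_false, iff_false]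
        rintro ⟨hx, hxt⟩; exact ht ⟨x, hx, hxt⟩
      exact HasChi.zero.congr (by ext; simp [this, indic]) rfl
  | zero => exact ⟨0, .zero, fun t => HasChi.zero.congr (by simp) rfl⟩
  | add _ _ h1 h2 =>
    obtain ⟨g1, h1, h1'⟩ := h1
    obtain ⟨g2, h2, h2'⟩ := h2
    exact ⟨_, h1.add h2, fun t => ((h1' t).add (h2' t)).congr (Set.indicator_add' _ _ _).symm rfl⟩
  | neg _ h =>
    obtain ⟨g, h, h'⟩ := h
    exact ⟨_, h.neg, fun t => (h' t).neg.congr (Set.indicator_neg' _ _).symm rfl⟩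

end General

/-! ### Dimension one -/

/-- On the line, `c = ∑_t (g(t) - g(t+))`: for the indicator of `[a, b]` only `t = b` contributes.
The jumps `g(t) - g(t+)` are recorded by `h`. -/
lemma HasChi.jumps {A : Set ℝ} {g : ℝ → ℤ} {c : ℤ} (hg : HasChi A g c) :
    ∃ h : ℝ →₀ ℤ, c = h.sum (fun _ a => a) ∧ ∀ t, ∀ᶠ s in 𝓝[>] t, g s = g t - h t := by
  induction hg with
  | of K hA hne hc hK =>
    have hb := hc.sSup_mem hne
    refine ⟨Finsupp.single (sSup K) 1, by simp, fun t => ?_⟩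
    rcases lt_trichotomy t (sSup K) with ht | ht | ht
    · rw [Finsupp.single_eq_of_ne ht.ne, sub_zero]
      by_cases htK : t ∈ K
      · filter_upwards [Ioo_mem_nhdsGT ht] with s hs
        rw [indic_mem htK, indic_mem (hK.ordConnected.out htK hb ⟨hs.1.le, hs.2.le⟩)]
      · filter_upwards [mem_nhdsWithin_of_mem_nhds (hc.isClosed.isOpen_compl.mem_nhds htK)]
          with s hs
        rw [indic_not_mem htK, indic_not_mem hs]
    · subst ht
      filter_upwards [self_mem_nhdsWithin] with s hs
      rw [indic_mem hb, indic_not_mem, Finsupp.single_eq_same, sub_self]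
      exact fun h => absurd (le_csSup hc.bddAbove h) (not_le.2 hs)
    · rw [Finsupp.single_eq_of_ne ht.ne', sub_zero]
      filter_upwards [self_mem_nhdsWithin] with s hs
      rw [indic_not_mem, indic_not_mem]
      · exact fun h => absurd (le_csSup hc.bddAbove h) (not_le.2 ht)
      · exact fun h => absurd (le_csSup hc.bddAbove h) (not_le.2 (ht.trans hs))
  | zero => exact ⟨0, by simp, fun t => by simp⟩
  | add _ _ h1 h2 =>
    obtain ⟨a, ha, ha'⟩ := h1
    obtain ⟨b, hb, hb'⟩ := h2
    refine ⟨a + b, ?_, fun t => ?_⟩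
    · rw [Finsupp.sum_add_index' (fun _ => rfl) (fun _ _ _ => rfl), ha, hb]
    · filter_upwards [ha' t, hb' t] with s h1 h2
      simp only [Pi.add_apply, Finsupp.add_apply, h1, h2]; ring
  | neg _ h =>
    obtain ⟨a, ha, ha'⟩ := h
    refine ⟨-a, ?_, fun t => ?_⟩
    · rw [Finsupp.sum_neg_index (fun _ => rfl), ha]; simp [Finsupp.sum]
    · filter_upwards [ha' t] with s h1
      simp only [Pi.neg_apply, Finsupp.neg_apply, h1]; ring

lemma HasChi.bdd {A : Set ℝ} {g : ℝ → ℤ} {c : ℤ} (hg : HasChi A g c) :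
    ∃ m : ℝ, ∀ t < m, g t = 0 := by
  induction hg with
  | of K hA hne hc hK =>
    obtain ⟨m, hm⟩ := hc.bddBelow
    exact ⟨m, fun t ht => indic_not_mem fun h => absurd (hm h) (not_le.2 ht)⟩
  | zero => exact ⟨0, fun _ _ => rfl⟩
  | add _ _ h1 h2 =>
    obtain ⟨a, ha⟩ := h1
    obtain ⟨b, hb⟩ := h2
    refine ⟨min a b, fun t ht => ?_⟩
    simp [ha t (ht.trans_le (min_le_left _ _)), hb t (ht.trans_le (min_le_right _ _))]
  | neg _ h =>
    obtain ⟨a, ha⟩ := h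
    exact ⟨a, fun t ht => by simp [ha t ht]⟩

/-- If all right jumps of `g` except the one at `a` vanish, then the jump at `a` is the Euler
characteristic. -/
lemma HasChi.eq_single {A : Set ℝ} {g : ℝ → ℤ} {c : ℤ} (hg : HasChi A g c) (a : ℝ) (e : ℤ)
    (h0 : ∀ t, t ≠ a → ∀ᶠ s in 𝓝[>] t, g s = g t) (ha : ∀ᶠ s in 𝓝[>] a, g s = g a - e) :
    c = e := by
  obtain ⟨h, rfl, hj⟩ := hg.jumps
  have : h = Finsupp.single a e := by
    ext t
    by_cases hta : t = a
    · subst hta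
      obtain ⟨s, h1, h2⟩ := ((hj t).and ha).exists
      rw [Finsupp.single_eq_same]; linarith
    · rw [Finsupp.single_eq_of_ne hta]
      obtain ⟨s, h1, h2⟩ := ((hj t).and (h0 t hta)).exists
      linarith
  simp [this]

/-- The Euler characteristic of `e` times the indicator of a bounded open interval is `-e`. -/
lemma HasChi.interval {A : Set ℝ} {g : ℝ → ℤ} {c : ℤ} (hg : HasChi A g c) (U : Set ℝ) (e : ℤ)
    (hne : U.Nonempty) (hU : U.OrdConnected) (hmax : ∀ t ∈ U, ∃ u ∈ U, t < u)
    (hmin : ∀ t ∈ U, ∃ u ∈ U, u < t) (h1 : ∀ t ∈ U, g t = e) (h0 : ∀ t, t ∉ U → g t = 0) :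
    c = -e := by
  by_cases he : e = 0
  · subst he
    have hz : ∀ t, g t = 0 := fun t => by
      by_cases h : t ∈ U
      exacts [h1 t h, h0 t h]
    exact hg.eq_single 0 (-0) (fun t _ => by simp [hz]) (by simp [hz])
  have hbdd : BddBelow U := by
    obtain ⟨m, hm⟩ := hg.bdd
    refine ⟨m, fun t ht => ?_⟩
    by_contra hlt
    exact he (by rw [← h1 t ht, hm t (not_le.1 hlt)])
  have hinf : sInf U ∉ U := fun h => by
    obtain ⟨u, hu, hlt⟩ := hmin _ h
    exact absurd (csInf_le hbdd hu) (not_le.2 hlt)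
  refine hg.eq_single (sInf U) (-e) (fun t ht => ?_) ?_
  · by_cases htU : t ∈ U
    · obtain ⟨u, hu, hlt⟩ := hmax t htU
      filter_upwards [Ioo_mem_nhdsGT hlt] with s hs
      rw [h1 t htU, h1 s (hU.out htU hu ⟨hs.1.le, hs.2.le⟩)]
    · rw [h0 t htU]
      rcases lt_or_gt_of_ne ht with hlt | hgt
      · filter_upwards [Ioo_mem_nhdsGT hlt] with s hs
        exact h0 s fun h => absurd (csInf_le hbdd h) (not_le.2 hs.2)
      · obtain ⟨u, hu, hut⟩ := exists_lt_of_csInf_lt hne hgt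
        filter_upwards [self_mem_nhdsWithin] with s hs
        exact h0 s fun h => htU (hU.out hu h ⟨hut.le, le_of_lt hs⟩)
  · obtain ⟨u, hu⟩ := hne
    have hlt : sInf U < u := lt_of_le_of_ne (csInf_le hbdd hu) (by rintro h; exact hinf (h ▸ hu))
    filter_upwards [Ioo_mem_nhdsGT hlt] with s hs
    obtain ⟨v, hv, hvs⟩ := exists_lt_of_csInf_lt ⟨u, hu⟩ hs.1
    rw [h1 s (hU.out hv hu ⟨hvs.le, hs.2.le⟩), h0 _ hinf]; ring

/-! ### Relatively open convex sets -/

section RelOpen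

variable {E : Type*} [AddCommGroup E] [Module ℝ E]

lemma RelOpen.slice {C : Set E} (hC : RelOpen C) (l : E →ₗ[ℝ] ℝ) (t : ℝ) :
    RelOpen (C ∩ {x | l x = t}) := by
  refine ⟨hC.1.inter (convex_hyperplane l.isLinear t), fun x hx y hy => ?_⟩
  obtain ⟨ε, hε, h⟩ := hC.2 x hx.1 y hy.1
  refine ⟨ε, hε, h, ?_⟩
  have h1 : l x = t := hx.2
  have h2 : l y = t := hy.2
  simp [h1, h2]

/-- A relatively open convex set is a neighbourhood of each of its points, in the directions of
its span. -/
lemma RelOpen.exists_add_smul {C : Set E} (hC : RelOpen C) {p : E} (hp : p ∈ C) {v : E}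
    (hv : v ∈ vectorSpan ℝ C) : ∃ ε : ℝ, 0 < ε ∧ p + ε • v ∈ C := by
  have shrink : ∀ {ε δ : ℝ} {w : E}, 0 < δ → δ ≤ ε → p + ε • w ∈ C → p + δ • w ∈ C := by
    intro ε δ w h0 h1 h
    have hε : 0 < ε := h0.trans_le h1
    have := hC.1.add_smul_mem hp h (t := δ / ε) ⟨by positivity, (div_le_one hε).2 h1⟩
    rwa [smul_smul, div_mul_cancel₀ _ hε.ne'] at this
  have hneg : ∀ w : E, (∃ ε : ℝ, 0 < ε ∧ p + ε • w ∈ C) → ∃ ε : ℝ, 0 < ε ∧ p + ε • (-w) ∈ C := by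
    rintro w ⟨ε, hε, h⟩
    obtain ⟨δ, hδ, h'⟩ := hC.2 p hp _ h
    refine ⟨δ * ε, by positivity, ?_⟩
    convert h' using 2
    rw [sub_add_cancel_left, smul_neg, smul_neg, smul_smul]
  rw [vectorSpan_eq_span_vsub_set_right ℝ hp] at hv
  induction hv using Submodule.span_induction with
  | mem x hx =>
    obtain ⟨y, hy, rfl⟩ := hx
    exact ⟨1, one_pos, by simpa using hy⟩
  | zero => exact ⟨1, one_pos, by simpa using hp⟩
  | add x y _ _ hx hy =>
    obtain ⟨ε, hε, h⟩ := hx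
    obtain ⟨δ, hδ, h'⟩ := hy
    have hm : 0 < min ε δ := lt_min hε hδ
    refine ⟨min ε δ / 2, by positivity, ?_⟩
    have := hC.1 (shrink hm (min_le_left _ _) h) (shrink hm (min_le_right _ _) h')
      (show (0 : ℝ) ≤ 1 / 2 by norm_num) (show (0 : ℝ) ≤ 1 / 2 by norm_num) (by norm_num)
    convert this using 1
    module
  | smul a x _ hx =>
    rcases lt_trichotomy a 0 with ha | rfl | ha
    · obtain ⟨ε, hε, h⟩ := hneg x hx
      refine ⟨ε / (-a), div_pos hε (by linarith), ?_⟩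
      convert h using 2
      rw [smul_smul, div_mul_eq_mul_div, div_neg, mul_div_cancel_right₀ _ ha.ne, neg_smul, smul_neg]
    · exact ⟨1, one_pos, by simpa using hp⟩
    · obtain ⟨ε, hε, h⟩ := hx
      refine ⟨ε / a, by positivity, ?_⟩
      rwa [smul_smul, div_mul_cancel₀ _ ha.ne']

lemma RelOpen.vectorSpan_slice {C : Set E} (hC : RelOpen C) (l : E →ₗ[ℝ] ℝ) {p : E}
    (hp : p ∈ C) : vectorSpan ℝ (C ∩ {x | l x = l p}) = vectorSpan ℝ C ⊓ LinearMap.ker l := by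
  apply le_antisymm
  · refine le_inf (vectorSpan_mono ℝ Set.inter_subset_left) ?_
    rw [vectorSpan_def, Submodule.span_le]
    rintro _ ⟨x, hx, y, hy, rfl⟩
    have h1 : l x = l p := hx.2
    have h2 : l y = l p := hy.2
    simp [h1, h2]
  · rintro v ⟨hv, hlv⟩
    have hlv : l v = 0 := hlv
    obtain ⟨ε, hε, h⟩ := hC.exists_add_smul hp hv
    have hmem : ε • v ∈ vectorSpan ℝ (C ∩ {x | l x = l p}) := by
      have := vsub_mem_vectorSpan ℝ (s := C ∩ {x | l x = l p}) (p₁ := p + ε • v) (p₂ := p)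
        ⟨h, by simp [hlv]⟩ ⟨hp, rfl⟩
      simpa using this
    have := Submodule.smul_mem _ ε⁻¹ hmem
    rwa [smul_smul, inv_mul_cancel₀ hε.ne', one_smul] at this

lemma finrank_inf_ker_add_one [FiniteDimensional ℝ E] (S : Submodule ℝ E) (l : E →ₗ[ℝ] ℝ)
    (h : ∃ v ∈ S, l v ≠ 0) : finrank ℝ (S ⊓ LinearMap.ker l : Submodule ℝ E) + 1 = finrank ℝ S := by
  obtain ⟨v, hv, hlv⟩ := h
  have hne : l.domRestrict S ≠ 0 := fun h => hlv (by
    simpa using congrArg (fun m => m ⟨v, hv⟩) h)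
  have := Module.Dual.finrank_ker_add_one_of_ne_zero (f := l.domRestrict S) hne
  rw [← this, ← Submodule.map_comap_subtype, Submodule.finrank_map_subtype_eq]
  rfl

end RelOpen

/-- The Euler characteristic of a nonempty relatively open convex set of dimension `d` is
`(-1) ^ d`. The induction is on the dimension of a subspace `W` containing all differences of
points of `A`: a slicing functional is constant on `C`, or its values fill an open interval over
which all slices have dimension `d - 1`. -/
theorem HasChi.relOpen (n : ℕ) : ∀ (W : Submodule ℝ V), finrank ℝ W = n → ∀ A : Set V,
    (∀ x ∈ A, ∀ y ∈ A, x - y ∈ W) → ∀ (C : Set V) (c : ℤ), RelOpen C → HasChi A (indic C) c →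
    c = iv C.Nonempty * (-1) ^ finrank ℝ (vectorSpan ℝ C) := by
  induction n using Nat.strong_induction_on with
  | _ n ih =>
  intro W hW A hA C c hC hc
  by_cases hWb : W = ⊥
  · have hsub : A.Subsingleton := fun x hx y hy => by
      have := hA x hx y hy
      rw [hWb, Submodule.mem_bot] at this
      exact sub_eq_zero.1 this
    have hCA : C ⊆ A := fun p hp => by
      by_contra hpA
      have := hc.support hpA
      rw [indic_mem hp] at this
      exact one_ne_zero this
    by_cases hne : C.Nonempty
    · obtain ⟨p, hp⟩ := hne
      have hs : vectorSpan ℝ C = ⊥ := vectorSpan_of_subsingleton ℝ (hsub.anti hCA)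
      rw [hc.eq_apply hsub (hCA hp), indic_mem hp, hs]
      simp [iv, show C.Nonempty from ⟨p, hp⟩]
    · have h0 : c = 0 := by
        rcases A.eq_empty_or_nonempty with hAe | ⟨a, ha⟩
        · exact hc.of_empty hAe
        · rw [hc.eq_apply hsub ha, indic_not_mem fun h => hne ⟨a, h⟩]
      simp [iv, hne, h0]
  obtain ⟨w, hw, hw0⟩ := Submodule.exists_mem_ne_zero_of_ne_bot hWb
  set l : V →L[ℝ] ℝ := innerSL ℝ w with hl
  obtain ⟨g, hg, hslice⟩ := hc.slice l
  have hlw : l w ≠ 0 := by simpa [hl] using hw0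
  have hlt : W ⊓ LinearMap.ker l.toLinearMap < W := by
    refine lt_of_le_of_ne inf_le_left fun h => hlw ?_
    rw [← h] at hw
    exact hw.2
  have hgt : ∀ t, g t = iv (C ∩ {x | l x = t}).Nonempty *
      (-1) ^ finrank ℝ (vectorSpan ℝ (C ∩ {x | l x = t})) := by
    intro t
    refine ih _ (hW ▸ Submodule.finrank_lt_finrank_of_lt hlt) _ rfl (A ∩ {x | l x = t}) ?_ _ _
      (hC.slice l.toLinearMap t) ((hslice t).congr ?_ rfl)
    · rintro x ⟨hx, hxt⟩ y ⟨hy, hyt⟩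
      have h1 : l x = t := hxt
      have h2 : l y = t := hyt
      exact ⟨hA x hx y hy, by simp [h1, h2]⟩
    · rw [Set.inter_comm]; simp only [indic, Set.indicator_indicator]
  by_cases hne : C.Nonempty
  swap
  · have hz : ∀ t, g t = 0 := fun t => by
      rw [hgt t]
      have : ¬ (C ∩ {x | l x = t}).Nonempty := fun h => hne (h.mono Set.inter_subset_left)
      simp [iv, this]
    rw [hg.eq_single 0 0 (fun t _ => by simp [hz]) (by simp [hz])]
    simp [iv, hne]
  have hout : ∀ t, t ∉ l '' C → g t = 0 := fun t ht => by
    rw [hgt t]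
    have : ¬ (C ∩ {x | l x = t}).Nonempty := by
      rintro ⟨x, hx, hxt⟩; exact ht ⟨x, hx, hxt⟩
    simp [iv, this]
  have hin : ∀ p ∈ C, g (l p) = (-1) ^ finrank ℝ (vectorSpan ℝ (C ∩ {x | l x = l p})) := by
    intro p hp
    rw [hgt]
    have : (C ∩ {x | l x = l p}).Nonempty := ⟨p, hp, rfl⟩
    simp [iv, this]
  have hiv : iv C.Nonempty = 1 := by simp [iv, hne]
  rw [hiv, one_mul]
  obtain ⟨p, hp⟩ := hne
  by_cases hconst : ∀ q ∈ C, l q = l p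
  · have hCp : C ∩ {x | l x = l p} = C := Set.inter_eq_left.2 hconst
    rw [← hCp, ← hin p hp]
    have hz : ∀ t, t ≠ l p → g t = 0 := fun t ht => hout t (by
      rintro ⟨q, hq, rfl⟩; exact ht (hconst q hq))
    refine hg.eq_single (l p) _ (fun t ht => ?_) ?_
    · filter_upwards [mem_nhdsWithin_of_mem_nhds (isOpen_ne.mem_nhds ht)] with s hs
      rw [hz s hs, hz t ht]
    · filter_upwards [self_mem_nhdsWithin] with s hs
      rw [hz s (ne_of_gt hs), sub_self]
  · push Not at hconst
    obtain ⟨q, hq, hqp⟩ := hconst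
    have hdim : ∀ x ∈ C, finrank ℝ (vectorSpan ℝ (C ∩ {y | l y = l x})) + 1 =
        finrank ℝ (vectorSpan ℝ C) := by
      intro x hx
      have h1 := hC.vectorSpan_slice l.toLinearMap hx
      have h2 := finrank_inf_ker_add_one (vectorSpan ℝ C) l.toLinearMap
        ⟨q - p, vsub_mem_vectorSpan ℝ hq hp, by simpa [sub_eq_zero] using hqp⟩
      rw [← h1] at h2
      exact h2
    -- Every point of `C` has a point of `C` at a different height, hence, by prolonging the
    -- segment, points of `C` strictly above and strictly below it.
    have hmove : ∀ x ∈ C, ∃ y ∈ C, l y ≠ l x := by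
      intro x hx
      by_cases h : l p = l x
      · exact ⟨q, hq, h ▸ hqp⟩
      · exact ⟨p, hp, h⟩
    have hboth : ∀ x ∈ C, (∃ y ∈ C, l x < l y) ∧ (∃ y ∈ C, l y < l x) := by
      intro x hx
      obtain ⟨y, hy, hyx⟩ := hmove x hx
      obtain ⟨ε, hε, h⟩ := hC.2 x hx y hy
      have hval : l (x + ε • (x - y)) = l x + ε * (l x - l y) := by simp
      rcases lt_or_gt_of_ne hyx with hlt | hgt
      · exact ⟨⟨_, h, by rw [hval]; nlinarith⟩, ⟨y, hy, hlt⟩⟩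
      · exact ⟨⟨y, hy, hgt⟩, ⟨_, h, by rw [hval]; nlinarith⟩⟩
    rw [hg.interval (l '' C) ((-1) ^ finrank ℝ (vectorSpan ℝ (C ∩ {y | l y = l p})))
      ⟨l p, p, hp, rfl⟩ (hC.1.linear_image l.toLinearMap).ordConnected ?_ ?_ ?_ hout,
      ← hdim p hp]
    · ring
    · rintro _ ⟨x, hx, rfl⟩
      obtain ⟨y, hy, h⟩ := (hboth x hx).1
      exact ⟨l y, ⟨y, hy, rfl⟩, h⟩
    · rintro _ ⟨x, hx, rfl⟩
      obtain ⟨y, hy, h⟩ := (hboth x hx).2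
      exact ⟨l y, ⟨y, hy, rfl⟩, h⟩
    · rintro _ ⟨x, hx, rfl⟩
      rw [hin x hx, Nat.succ_injective ((hdim x hx).trans (hdim p hp).symm)]

theorem HasChi.unique {A B : Set V} {f : V → ℤ} {c d : ℤ} (h : HasChi A f c) (h' : HasChi B f d) :
    c = d := by
  have h0 : HasChi Set.univ (indic (∅ : Set V)) (c - d) :=
    ((h.mono (Set.subset_univ _)).sub (h'.mono (Set.subset_univ _))).congr
      (by ext; simp [indic]) rfl
  have hro : RelOpen (∅ : Set V) := ⟨convex_empty, by simp⟩
  have := HasChi.relOpen _ (⊤ : Submodule ℝ V) rfl Set.univ (by simp) _ _ hro h0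
  simp [iv] at this
  linarith

/-! ### Faces and cells of a polytope -/

/-- The polyhedron cut out by the inequalities `⟪p.1, x⟫ ≤ p.2` for `p ∈ s`. -/
def poly (s : Finset (V × ℝ)) : Set V := {x | ∀ p ∈ s, ⟪p.1, x⟫ ≤ p.2}

open Classical in
/-- The inequalities in `s` that are equalities at `q`. -/
noncomputable def act (s : Finset (V × ℝ)) (q : V) : Finset (V × ℝ) :=
  s.filter fun p => ⟪p.1, q⟫ = p.2

/-- The points of `poly s` at which all inequalities in `I` are equalities: a face, or empty. -/
def flat (s I : Finset (V × ℝ)) : Set V := {x | x ∈ poly s ∧ ∀ p ∈ I, ⟪p.1, x⟫ = p.2}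

/-- The points of `poly s` whose active inequalities are exactly those in `I`; when nonempty, this
is the relative interior of the face `flat s I`. -/
def cell (s I : Finset (V × ℝ)) : Set V := {x | x ∈ poly s ∧ act s x = I}

lemma mem_act {s : Finset (V × ℝ)} {q : V} {p : V × ℝ} :
    p ∈ act s q ↔ p ∈ s ∧ ⟪p.1, q⟫ = p.2 := by
  simp [act]

lemma cell_subset_flat (s I : Finset (V × ℝ)) : cell s I ⊆ flat s I := by
  rintro x ⟨hx, rfl⟩
  exact ⟨hx, fun p hp => (mem_act.1 hp).2⟩

lemma convex_poly (s : Finset (V × ℝ)) : Convex ℝ (poly s) := by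
  intro x hx y hy a b ha hb hab p hp
  rw [inner_add_right, inner_smul_right, inner_smul_right]
  have h1 := mul_le_mul_of_nonneg_left (hx p hp) ha
  have h2 := mul_le_mul_of_nonneg_left (hy p hp) hb
  have h3 : a * p.2 + b * p.2 = p.2 := by rw [← add_mul, hab, one_mul]
  linarith

lemma isClosed_poly (s : Finset (V × ℝ)) : IsClosed (poly s) := by
  have : poly s = ⋂ p ∈ s, {x | ⟪p.1, x⟫ ≤ p.2} := by ext; simp [poly]
  rw [this]
  exact isClosed_biInter fun p _ => isClosed_le (by fun_prop) continuous_const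

lemma convex_flat (s I : Finset (V × ℝ)) : Convex ℝ (flat s I) := by
  rintro x ⟨hx, hxI⟩ y ⟨hy, hyI⟩ a b ha hb hab
  refine ⟨convex_poly s hx hy ha hb hab, fun p hp => ?_⟩
  rw [inner_add_right, inner_smul_right, inner_smul_right, hxI p hp, hyI p hp, ← add_mul, hab,
    one_mul]

lemma isCompact_flat {s : Finset (V × ℝ)} (hs : IsCompact (poly s)) (I : Finset (V × ℝ)) :
    IsCompact (flat s I) := by
  have : flat s I = poly s ∩ ⋂ p ∈ I, {x | ⟪p.1, x⟫ = p.2} := by ext; simp [flat]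
  rw [this]
  exact hs.inter_right (isClosed_biInter fun p _ => isClosed_eq (by fun_prop) continuous_const)

/-- A proper convex combination is active exactly where both endpoints are. -/
lemma act_combo {s : Finset (V × ℝ)} {x y : V} (hx : x ∈ poly s) (hy : y ∈ poly s) {a b : ℝ}
    (ha : 0 < a) (hb : 0 < b) (hab : a + b = 1) (p : V × ℝ) :
    p ∈ act s (a • x + b • y) ↔ p ∈ act s x ∧ p ∈ act s y := by
  simp only [mem_act, inner_add_right, inner_smul_right]
  have h3 : a * p.2 + b * p.2 = p.2 := by rw [← add_mul, hab, one_mul]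
  constructor
  · rintro ⟨hp, h⟩
    have h1 := hx p hp
    have h2 := hy p hp
    refine ⟨⟨hp, ?_⟩, ⟨hp, ?_⟩⟩ <;> apply le_antisymm (by assumption) <;> nlinarith
  · rintro ⟨⟨hp, h1⟩, ⟨_, h2⟩⟩
    exact ⟨hp, by rw [h1, h2, h3]⟩

lemma eventually_inactive {s : Finset (V × ℝ)} {q : V} (hq : q ∈ poly s) (d : V) :
    ∀ᶠ ε in 𝓝[>] (0 : ℝ), ∀ p ∈ s, p ∉ act s q → ⟪p.1, q + ε • d⟫ < p.2 := by
  rw [Finset.eventually_all]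
  intro p hp
  by_cases hpa : p ∈ act s q
  · simp [hpa]
  have hlt : ⟪p.1, q + (0 : ℝ) • d⟫ < p.2 := by
    rw [zero_smul, add_zero]
    exact lt_of_le_of_ne (hq p hp) fun h => hpa (mem_act.2 ⟨hp, h⟩)
  have hcont : Continuous fun ε : ℝ => ⟪p.1, q + ε • d⟫ := by fun_prop
  have := (hcont.tendsto 0).eventually_lt_const hlt
  filter_upwards [mem_nhdsWithin_of_mem_nhds this] with ε hε _
  exact hε

lemma exists_add_smul_mem {s : Finset (V × ℝ)} {q : V} (hq : q ∈ poly s) {d : V}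
    (hd : ∀ p ∈ act s q, ⟪p.1, d⟫ ≤ 0) : ∃ ε : ℝ, 0 < ε ∧ q + ε • d ∈ poly s := by
  obtain ⟨ε, h, hε⟩ := ((eventually_inactive hq d).and self_mem_nhdsWithin).exists
  have hε : 0 < ε := hε
  refine ⟨ε, hε, fun p hp => ?_⟩
  by_cases hpa : p ∈ act s q
  · rw [inner_add_right, inner_smul_right, (mem_act.1 hpa).2]
    have := mul_nonpos_of_nonneg_of_nonpos hε.le (hd p hpa)
    linarith
  · exact (h p hp hpa).le

lemma relOpen_cell (s I : Finset (V × ℝ)) : RelOpen (cell s I) := by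
  constructor
  · refine convex_iff_forall_pos.2 ?_
    rintro x ⟨hx, hxI⟩ y ⟨hy, hyI⟩ a b ha hb hab
    refine ⟨convex_poly s hx hy ha.le hb.le hab, ?_⟩
    ext p
    rw [act_combo hx hy ha hb hab, hxI, hyI, and_self]
  · rintro x ⟨hx, rfl⟩ y ⟨hy, hyI⟩
    obtain ⟨ε, h, hε⟩ := ((eventually_inactive hx (x - y)).and self_mem_nhdsWithin).exists
    have hε : 0 < ε := hε
    have heq : ∀ p ∈ act s x, ⟪p.1, x + ε • (x - y)⟫ = p.2 := fun p hp => by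
      rw [inner_add_right, inner_smul_right, inner_sub_right, (mem_act.1 hp).2,
        (mem_act.1 (hyI ▸ hp : p ∈ act s y)).2]
      ring
    refine ⟨ε, hε, fun p hp => ?_, ?_⟩
    · by_cases hpa : p ∈ act s x
      · exact (heq p hpa).le
      · exact (h p hp hpa).le
    · ext p
      constructor
      · intro hp
        by_contra hpa
        exact (h p (mem_act.1 hp).1 hpa).ne (mem_act.1 hp).2
      · exact fun hp => mem_act.2 ⟨(mem_act.1 hp).1, heq p hp⟩

lemma midpoint_mem_cell {s I : Finset (V × ℝ)} {x y : V} (hx : x ∈ cell s I) (hy : y ∈ flat s I) :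
    (1 / 2 : ℝ) • x + (1 / 2 : ℝ) • y ∈ cell s I := by
  obtain ⟨hx, rfl⟩ := hx
  refine ⟨convex_poly s hx hy.1 (by norm_num) (by norm_num) (by norm_num), ?_⟩
  ext p
  rw [act_combo hx hy.1 (by norm_num) (by norm_num) (by norm_num)]
  exact ⟨fun h => h.1, fun h => ⟨h, mem_act.2 ⟨(mem_act.1 h).1, hy.2 p h⟩⟩⟩

lemma direction_flat {s I : Finset (V × ℝ)} (hne : (cell s I).Nonempty) :
    (affineSpan ℝ (flat s I)).direction = vectorSpan ℝ (cell s I) := by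
  rw [direction_affineSpan]
  refine le_antisymm ?_ (vectorSpan_mono ℝ (cell_subset_flat s I))
  obtain ⟨q, hq⟩ := hne
  rw [vectorSpan_eq_span_vsub_set_right ℝ (cell_subset_flat s I hq), Submodule.span_le]
  rintro _ ⟨y, hy, rfl⟩
  have h := Submodule.smul_mem _ (2 : ℝ) (vsub_mem_vectorSpan ℝ (midpoint_mem_cell hq hy) hq)
  simp only [vsub_eq_sub] at h ⊢
  have e : y - q = (2 : ℝ) • ((1 / 2 : ℝ) • q + (1 / 2 : ℝ) • y - q) := by module
  exact e ▸ h

lemma isFace_flat {s I : Finset (V × ℝ)} (hne : (cell s I).Nonempty) :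
    IsFace (poly s) (flat s I) := by
  obtain ⟨q, hq, rfl⟩ := hne
  have hsum : ∀ x, ⟪∑ p ∈ act s q, p.1, x⟫ = ∑ p ∈ act s q, ⟪p.1, x⟫ := fun x => sum_inner _ _ _
  have hqf : q ∈ flat s (act s q) := cell_subset_flat s _ ⟨hq, rfl⟩
  have hle : ∀ x ∈ poly s, ∀ p ∈ act s q, ⟪p.1, x⟫ ≤ p.2 := fun x hx p hp => hx p (mem_act.1 hp).1
  refine ⟨∑ p ∈ act s q, p.1, ⟨q, hqf⟩, ?_⟩
  ext x
  simp only [hsum]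
  constructor
  · rintro ⟨hx, hxe⟩
    exact ⟨hx, fun z hz => Finset.sum_le_sum fun p hp => (hle z hz p hp).trans (hxe p hp).ge⟩
  · rintro ⟨hx, hmax⟩
    refine ⟨hx, ?_⟩
    rw [← Finset.sum_eq_sum_iff_of_le (hle x hx)]
    refine le_antisymm (Finset.sum_le_sum (hle x hx)) ?_
    rw [← Finset.sum_congr rfl hqf.2]
    exact hmax q hq

/-- Every face is `flat s I` for a nonempty cell `I`, found by choosing a point of the face with
as few active inequalities as possible. -/
lemma exists_flat_of_isFace {s : Finset (V × ℝ)} {F : Set V} (hF : IsFace (poly s) F) :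
    ∃ I ∈ s.powerset, (cell s I).Nonempty ∧ flat s I = F := by
  obtain ⟨y, hne, hFy⟩ := hF
  obtain ⟨q, hq, hmin⟩ : ∃ q ∈ F, ∀ z ∈ F, (act s q).card ≤ (act s z).card := by
    obtain ⟨q, hq⟩ := exists_minimalFor_of_wellFoundedLT (· ∈ F) (fun z => (act s z).card) hne
    exact ⟨q, hq.1, fun z hz => (le_total _ _).elim id fun h => hq.2 hz h⟩
  have hF : ∀ z, z ∈ F ↔ z ∈ poly s ∧ ∀ w ∈ poly s, ⟪y, w⟫ ≤ ⟪y, z⟫ := fun z => by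
    rw [hFy]; rfl
  have hqP := (hF q).1 hq
  refine ⟨act s q, Finset.mem_powerset.2 fun p hp => (mem_act.1 hp).1, ⟨q, hqP.1, rfl⟩, ?_⟩
  ext z
  constructor
  · rintro ⟨hz, hzI⟩
    obtain ⟨ε, hε, h⟩ := exists_add_smul_mem hqP.1 (d := q - z) fun p hp => by
      rw [inner_sub_right, (mem_act.1 hp).2, hzI p hp, sub_self]
    have h1 := hqP.2 _ h
    rw [inner_add_right, inner_smul_right, inner_sub_right] at h1
    have h2 : ⟪y, q⟫ ≤ ⟪y, z⟫ := by nlinarith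
    exact (hF z).2 ⟨hz, fun w hw => (hqP.2 w hw).trans h2⟩
  · intro hz
    have hzP := (hF z).1 hz
    have hm : (1 / 2 : ℝ) • q + (1 / 2 : ℝ) • z ∈ F := by
      refine (hF _).2 ⟨convex_poly s hqP.1 hzP.1 (by norm_num) (by norm_num) (by norm_num),
        fun w hw => ?_⟩
      rw [inner_add_right, inner_smul_right, inner_smul_right]
      linarith [hqP.2 w hw, hzP.2 w hw]
    have hact := act_combo hqP.1 hzP.1 (a := 1 / 2) (b := 1 / 2) (by norm_num) (by norm_num)
      (by norm_num)
    have hsub : act s ((1 / 2 : ℝ) • q + (1 / 2 : ℝ) • z) ⊆ act s q := fun p hp =>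
      ((hact p).1 hp).1
    have heq := Finset.eq_of_subset_of_card_le hsub (hmin _ hm)
    exact ⟨hzP.1, fun p hp => (mem_act.1 ((hact p).1 (heq ▸ hp)).2).2⟩

lemma flat_injOn {s I I' : Finset (V × ℝ)} (h : (cell s I).Nonempty) (h' : (cell s I').Nonempty)
    (he : flat s I = flat s I') : I = I' := by
  obtain ⟨q, hq⟩ := h
  obtain ⟨r, hr⟩ := h'
  have hqf : q ∈ flat s I' := he ▸ cell_subset_flat s I hq
  have hrf : r ∈ flat s I := he ▸ cell_subset_flat s I' hr
  obtain ⟨_, rfl⟩ := hq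
  obtain ⟨_, rfl⟩ := hr
  ext p
  exact ⟨fun hp => mem_act.2 ⟨(mem_act.1 hp).1, hrf.2 p hp⟩,
    fun hp => mem_act.2 ⟨(mem_act.1 hp).1, hqf.2 p hp⟩⟩

/-- The set `C_F(Q) + F` is cut out by the inequalities that are active on all of `F`. -/
lemma tanCone_add_flat {s I : Finset (V × ℝ)} (hne : (cell s I).Nonempty) :
    tanCone (poly s) (flat s I) + flat s I = {x | ∀ p ∈ I, ⟪p.1, x⟫ ≤ p.2} := by
  obtain ⟨q, hq⟩ := hne
  have hqf := cell_subset_flat s I hq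
  obtain ⟨hqP, rfl⟩ := hq
  ext x
  constructor
  · rintro ⟨d, hd, v, hv, rfl⟩ p hp
    have hcone : IsConvexCone {d : V | ⟪p.1, d⟫ ≤ 0} := by
      refine ⟨by simp, ?_, ?_⟩
      · intro a ha b hb α β hα hβ _
        have ha : ⟪p.1, a⟫ ≤ 0 := ha
        have hb : ⟪p.1, b⟫ ≤ 0 := hb
        change ⟪p.1, α • a + β • b⟫ ≤ 0
        rw [inner_add_right, inner_smul_right, inner_smul_right]
        nlinarith
      · intro α hα a ha
        have ha : ⟪p.1, a⟫ ≤ 0 := ha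
        change ⟪p.1, α • a⟫ ≤ 0
        rw [inner_smul_right]
        nlinarith
    have hd0 : ⟪p.1, d⟫ ≤ 0 := by
      refine hd _ ⟨hcone, ?_⟩
      rintro _ ⟨r, hr, u, hu, rfl⟩
      change ⟪p.1, r - u⟫ ≤ 0
      rw [inner_sub_right, hu.2 p hp]
      linarith [hr p (mem_act.1 hp).1]
    change ⟪p.1, d + v⟫ ≤ p.2
    rw [inner_add_right, hv.2 p hp]
    linarith
  · intro hx
    obtain ⟨ε, hε, h⟩ := exists_add_smul_mem hqP (d := x - q) fun p hp => by
      rw [inner_sub_right, (mem_act.1 hp).2]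
      linarith [hx p hp]
    refine ⟨x - q, ?_, q, hqf, sub_add_cancel x q⟩
    rintro D ⟨hD, hsub⟩
    have := hD.2.2 ε⁻¹ (inv_nonneg.2 hε.le) _ (hsub ⟨_, h, q, hqf, rfl⟩)
    rwa [add_sub_cancel_left, smul_smul, inv_mul_cancel₀ hε.ne', one_smul] at this

lemma HasChi.indic_cell {s : Finset (V × ℝ)} (hs : IsCompact (poly s)) (I : Finset (V × ℝ))
    (hI : I ⊆ s) : HasChi Set.univ (indic (cell s I))
      (iv (cell s I).Nonempty * (-1) ^ finrank ℝ (vectorSpan ℝ (cell s I))) := by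
  classical
  obtain ⟨c, hc⟩ := HasChi.indic_of (isCompact_flat hs I) (convex_flat s I)
  obtain ⟨d, hd⟩ := HasChi.biUnion (s \ I) (fun p => flat s (insert p I))
    (fun p _ => isCompact_flat hs _) (fun p _ => convex_flat s _)
  have h : HasChi Set.univ (indic (cell s I)) (c - d) := by
    refine ((hc.mono (Set.subset_univ _)).sub (hd.mono (Set.subset_univ _))).congr ?_ rfl
    ext x
    have hsub : x ∈ (⋃ p ∈ s \ I, flat s (insert p I)) → x ∈ flat s I := by
      simp only [Set.mem_iUnion]
      rintro ⟨p, _, hx, hxp⟩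
      exact ⟨hx, fun r hr => hxp r (by simp [hr])⟩
    have hcell : x ∈ cell s I ↔ x ∈ flat s I ∧ x ∉ ⋃ p ∈ s \ I, flat s (insert p I) := by
      constructor
      · intro hx
        refine ⟨cell_subset_flat s I hx, ?_⟩
        simp only [Set.mem_iUnion, Finset.mem_sdiff]
        rintro ⟨p, ⟨hp, hpI⟩, _, hxp⟩
        exact hpI (hx.2 ▸ mem_act.2 ⟨hp, hxp p (by simp)⟩)
      · rintro ⟨hx, hnot⟩
        refine ⟨hx.1, ?_⟩
        ext p
        constructor
        · intro hp
          by_contra hpI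
          refine hnot (Set.mem_iUnion₂.2 ⟨p, Finset.mem_sdiff.2 ⟨(mem_act.1 hp).1, hpI⟩, hx.1, ?_⟩)
          intro r hr
          rcases Finset.mem_insert.1 hr with rfl | hr
          exacts [(mem_act.1 hp).2, hx.2 r hr]
        · exact fun hp => mem_act.2 ⟨hI hp, hx.2 p hp⟩
    by_cases h1 : x ∈ flat s I
    · by_cases h2 : x ∈ ⋃ p ∈ s \ I, flat s (insert p I)
      · rw [Pi.sub_apply, indic_mem h1, indic_mem h2, indic_not_mem fun h => (hcell.1 h).2 h2,
          sub_self]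
      · rw [Pi.sub_apply, indic_mem h1, indic_not_mem h2, indic_mem (hcell.2 ⟨h1, h2⟩), sub_zero]
    · rw [Pi.sub_apply, indic_not_mem h1, indic_not_mem fun h => h1 (hsub h),
        indic_not_mem fun h => h1 (hcell.1 h).1, sub_zero]
  exact h.congr rfl (HasChi.relOpen _ (⊤ : Submodule ℝ V) rfl _ (by simp) _ _ (relOpen_cell s I) h)

/-! ### The part of the boundary visible from a point -/

/-- The central projection from `x` onto the affine hyperplane `l = 1` of directions. -/
noncomputable def persp (l : V →L[ℝ] ℝ) (x q : V) : V := (l (q - x))⁻¹ • (q - x)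

lemma convex_persp {l : V →L[ℝ] ℝ} {x : V} {K : Set V} (hK : Convex ℝ K)
    (hpos : ∀ q ∈ K, 0 < l (q - x)) : Convex ℝ (persp l x '' K) := by
  refine convex_iff_forall_pos.2 ?_
  rintro _ ⟨q, hq, rfl⟩ _ ⟨r, hr, rfl⟩ a b ha hb hab
  have h1 := hpos q hq
  have h2 := hpos r hr
  set τ := l (q - x) with hτ
  set σ := l (r - x) with hσ
  set S := a / τ + b / σ with hS
  have hS0 : 0 < S := by positivity
  have hw : a / τ / S + b / σ / S = 1 := by rw [← add_div, ← hS, div_self (ne_of_gt hS0)]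
  -- Rescaling the weights by the distances `τ`, `σ` gives the preimage of the combination.
  refine ⟨(a / τ / S) • q + (b / σ / S) • r,
    hK hq hr (by positivity) (by positivity) hw, ?_⟩
  have e : (a / τ / S) • q + (b / σ / S) • r - x =
      (a / τ / S) • (q - x) + (b / σ / S) • (r - x) := by
    have : x = (a / τ / S + b / σ / S) • x := by rw [hw, one_smul]
    nth_rewrite 1 [this]
    module
  have hl : l ((a / τ / S) • (q - x) + (b / σ / S) • (r - x)) = 1 / S := by
    rw [map_add, map_smul, map_smul, ← hτ, ← hσ, smul_eq_mul, smul_eq_mul]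
    field_simp
    exact hab
  simp only [persp]
  rw [e, hl, ← hτ, ← hσ, smul_add, smul_smul, smul_smul, smul_smul, smul_smul]
  congr 2 <;> field_simp

lemma continuousOn_persp {l : V →L[ℝ] ℝ} {x : V} {K : Set V} (hpos : ∀ q ∈ K, 0 < l (q - x)) :
    ContinuousOn (persp l x) K := by
  unfold persp
  exact ContinuousOn.smul (ContinuousOn.inv₀ (by fun_prop) fun q hq => (hpos q hq).ne')
    (by fun_prop)

/-- Euler characteristics are preserved by a central projection that is injective on `B`. -/
lemma HasChi.image_persp {l : V →L[ℝ] ℝ} {x : V} {B : Set V} (hpos : ∀ q ∈ B, 0 < l (q - x))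
    (hinj : Set.InjOn (persp l x) B) {f : V → ℤ} {c : ℤ} (h : HasChi B f c) :
    ∃ g, HasChi Set.univ g c ∧ (∀ b ∈ B, g (persp l x b) = f b) ∧
      ∀ w, w ∉ persp l x '' B → g w = 0 := by
  induction h with
  | of K hA hne hc hK =>
    have hposK : ∀ q ∈ K, 0 < l (q - x) := fun q hq => hpos q (hA hq)
    refine ⟨indic (persp l x '' K), .of _ (Set.subset_univ _) (hne.image _)
      (hc.image_of_continuousOn (continuousOn_persp hposK)) (convex_persp hK hposK), ?_, ?_⟩
    · intro b hb
      by_cases hbK : b ∈ K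
      · rw [indic_mem hbK, indic_mem (Set.mem_image_of_mem _ hbK)]
      · rw [indic_not_mem hbK, indic_not_mem]
        rintro ⟨k, hk, hkb⟩
        exact hbK (hinj (hA hk) hb hkb ▸ hk)
    · exact fun w hw => indic_not_mem fun h => hw (Set.image_mono hA h)
  | zero => exact ⟨0, .zero, fun _ _ => rfl, fun _ _ => rfl⟩
  | add _ _ h1 h2 =>
    obtain ⟨g1, h1, h1', h1''⟩ := h1
    obtain ⟨g2, h2, h2', h2''⟩ := h2
    exact ⟨_, h1.add h2, fun b hb => by simp [h1' b hb, h2' b hb],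
      fun w hw => by simp [h1'' w hw, h2'' w hw]⟩
  | neg _ h =>
    obtain ⟨g, h, h', h''⟩ := h
    exact ⟨_, h.neg, fun b hb => by simp [h' b hb], fun w hw => by simp [h'' w hw]⟩

/-- Let `J ≠ ∅` be the set of inequalities violated at `x`. The union `B` of the faces on which
some `j ∈ J` is active consists of the first points of `Q` on the rays from `x`, so that central
projection maps it bijectively onto the projection of `Q`. Hence `B` has Euler characteristic `1`,
and `Q \ B` has Euler characteristic `0`. -/
lemma HasChi.invisible {s J : Finset (V × ℝ)} (hs : IsCompact (poly s)) (hne : (poly s).Nonempty)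
    {x : V} (hJ : ∀ p, p ∈ J ↔ p ∈ s ∧ p.2 < ⟪p.1, x⟫) (hJne : J.Nonempty) :
    HasChi Set.univ (indic {q | q ∈ poly s ∧ Disjoint (act s q) J}) 0 := by
  classical
  have hx : x ∉ poly s := fun h => by
    obtain ⟨j, hj⟩ := hJne
    exact absurd (h j ((hJ j).1 hj).1) (not_le.2 ((hJ j).1 hj).2)
  obtain ⟨l, u, hlx, hlu⟩ := geometric_hahn_banach_point_closed (convex_poly s)
    (isClosed_poly s) hx
  have hpos : ∀ q ∈ poly s, 0 < l (q - x) := fun q hq => by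
    rw [map_sub]; linarith [hlu q hq]
  set B : Set V := ⋃ j ∈ J, flat s {j} with hB
  have hmemB : ∀ q, q ∈ B ↔ q ∈ poly s ∧ ∃ j ∈ J, ⟪j.1, q⟫ = j.2 := by
    intro q
    simp only [hB, Set.mem_iUnion, exists_prop, flat, Set.mem_ofPred_eq, Finset.mem_singleton,
      forall_eq]
    exact ⟨fun ⟨j, hj, hq, h⟩ => ⟨hq, j, hj, h⟩, fun ⟨hq, j, hj, h⟩ => ⟨j, hj, hq, h⟩⟩
  have hBs : B ⊆ poly s := fun q hq => ((hmemB q).1 hq).1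
  obtain ⟨c, hc⟩ := HasChi.biUnion J (fun j => flat s {j}) (fun p _ => isCompact_flat hs _)
    (fun p _ => convex_flat s _)
  rw [← hB] at hc
  -- Of two points of `Q` on a ray from `x`, the farther one is not in `B`.
  have hray : ∀ q ∈ poly s, ∀ r ∈ B, ∀ μ : ℝ, q - x = μ • (r - x) → 1 ≤ μ := by
    intro q hq r hr μ h
    obtain ⟨_, j, hj, hjr⟩ := (hmemB r).1 hr
    obtain ⟨hjs, hjx⟩ := (hJ j).1 hj
    have h1 := congrArg (fun v => ⟪j.1, v⟫) h
    simp only [inner_sub_right, inner_smul_right, hjr] at h1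
    have h2 := hq j hjs
    by_contra hμ
    push Not at hμ
    nlinarith
  have hinj : Set.InjOn (persp l x) B := by
    intro q hq r hr h
    have h1 := hpos q (hBs hq)
    have h2 := hpos r (hBs hr)
    simp only [persp] at h
    have e1 : q - x = (l (q - x) / l (r - x)) • (r - x) := by
      rw [div_eq_mul_inv, mul_smul, ← h, smul_smul, mul_inv_cancel₀ h1.ne', one_smul]
    have e2 : r - x = (l (r - x) / l (q - x)) • (q - x) := by
      rw [div_eq_mul_inv, mul_smul, h, smul_smul, mul_inv_cancel₀ h2.ne', one_smul]
    have h3 := (one_le_div h2).1 (hray q (hBs hq) r hr _ e1)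
    have h4 := (one_le_div h1).1 (hray r (hBs hr) q hq _ e2)
    rw [le_antisymm h4 h3, div_self h2.ne', one_smul] at e1
    exact sub_left_injective e1
  have himage : persp l x '' B = persp l x '' poly s := by
    refine Set.Subset.antisymm (Set.image_mono hBs) ?_
    rintro _ ⟨q, hq, rfl⟩
    -- The ray from `x` to `q` meets the hyperplane of `j` at parameter `ρ j`, and enters `Q` at
    -- the largest of these parameters.
    set ρ : V × ℝ → ℝ := fun j => (⟪j.1, x⟫ - j.2) / (⟪j.1, x⟫ - ⟪j.1, q⟫) with hρ
    obtain ⟨j, hj, hjmax⟩ := Finset.exists_max_image J ρ hJne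
    have hden : ∀ i ∈ J, 0 < ⟪i.1, x⟫ - ⟪i.1, q⟫ := fun i hi => by
      have := (hJ i).1 hi
      linarith [hq i this.1]
    have hρ0 : 0 < ρ j := div_pos (by linarith [((hJ j).1 hj).2]) (hden j hj)
    have hρ1 : ρ j ≤ 1 := (div_le_one (hden j hj)).2 (by linarith [hq j ((hJ j).1 hj).1])
    have hval : ∀ v : V, ⟪v, x + ρ j • (q - x)⟫ = ⟪v, x⟫ - ρ j * (⟪v, x⟫ - ⟪v, q⟫) := fun v => by
      rw [inner_add_right, inner_smul_right, inner_sub_right]; ring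
    refine ⟨x + ρ j • (q - x), (hmemB _).2 ⟨fun i hi => ?_, j, hj, ?_⟩, ?_⟩
    · rw [hval]
      by_cases hiJ : i ∈ J
      · have := (div_le_iff₀ (hden i hiJ)).1 (hjmax i hiJ)
        linarith
      · have h1 : ⟪i.1, x⟫ ≤ i.2 := by
          by_contra h
          exact hiJ ((hJ i).2 ⟨hi, not_le.1 h⟩)
        have h2 := hq i hi
        nlinarith
    · rw [hval]
      have : ρ j * (⟪j.1, x⟫ - ⟪j.1, q⟫) = ⟪j.1, x⟫ - j.2 := div_mul_cancel₀ _ (hden j hj).ne'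
      linarith
    · simp only [persp, add_sub_cancel_left, map_smul, smul_eq_mul, smul_smul]
      congr 1
      have := hpos q hq
      field_simp
  obtain ⟨g, hg, hgB, hg0⟩ := hc.image_persp (fun q hq => hpos q (hBs hq)) hinj
  have hge : g = indic (persp l x '' poly s) := by
    ext w
    by_cases hw : w ∈ persp l x '' B
    · rw [indic_mem (himage ▸ hw)]
      obtain ⟨b, hb, rfl⟩ := hw
      rw [hgB b hb, indic_mem hb]
    · rw [hg0 w hw, indic_not_mem (himage ▸ hw)]
  rw [hge] at hg
  have hc1 : c = 1 := hg.unique (HasChi.of (A := Set.univ) _ (Set.subset_univ _) (hne.image _)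
    (hs.image_of_continuousOn (continuousOn_persp hpos)) (convex_persp (convex_poly s) hpos))
  have hQ : HasChi Set.univ (indic (poly s)) 1 :=
    .of _ (Set.subset_univ _) hne hs (convex_poly s)
  refine (hQ.sub (hc.mono (Set.subset_univ _))).congr ?_ (by rw [hc1, sub_self])
  ext q
  have hdis : Disjoint (act s q) J ↔ ¬ ∃ j ∈ J, ⟪j.1, q⟫ = j.2 := by
    rw [Finset.disjoint_right]
    push Not
    refine forall₂_congr fun j hj => ?_
    rw [mem_act, not_and]
    exact ⟨fun h => h ((hJ j).1 hj).1, fun h _ => h⟩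
  by_cases hq : q ∈ poly s
  · by_cases hqB : q ∈ B
    · rw [Pi.sub_apply, indic_mem hq, indic_mem hqB, indic_not_mem, sub_self]
      exact fun h => hdis.1 h.2 ((hmemB q).1 hqB).2
    · rw [Pi.sub_apply, indic_mem hq, indic_not_mem hqB, indic_mem, sub_zero]
      exact ⟨hq, hdis.2 fun h => hqB ((hmemB q).2 ⟨hq, h⟩)⟩
  · rw [Pi.sub_apply, indic_not_mem hq, indic_not_mem fun h => hq (hBs h),
      indic_not_mem fun h => hq h.1, sub_zero]

/-- Brianchon–Gram: for a polytope `Q`,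
`1_Q = ∑_F (−1)^{dim F} 1_{C_F(Q) + F}`, the sum being over all faces `F` of `Q`. -/
theorem brianchon_gram (Q : Set V) (hQ : IsPolytope Q)
    (Fs : Finset (Set V)) (hFs : ∀ F : Set V, F ∈ Fs ↔ IsFace Q F) :
    indic Q =
      ∑ F ∈ Fs, ((-1 : ℤ) ^ (Module.finrank ℝ (affineSpan ℝ F).direction)) •
        indic (tanCone Q F + F) := by
  classical
  obtain ⟨⟨hne, s, hs⟩, hbdd⟩ := hQ
  obtain rfl : Q = poly s := hs
  have hcpt : IsCompact (poly s) := Metric.isCompact_of_isClosed_isBounded (isClosed_poly s) hbdd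
  ext x
  set J := s.filter fun p => p.2 < ⟪p.1, x⟫ with hJdef
  have hJ : ∀ p, p ∈ J ↔ p ∈ s ∧ p.2 < ⟪p.1, x⟫ := fun p => by simp [hJdef]
  -- Faces correspond to nonempty cells; those contributing at `x` are the cells avoiding `J`.
  have hFs' : Fs = (s.powerset.filter fun I => (cell s I).Nonempty).image (flat s) := by
    ext F
    rw [hFs, Finset.mem_image]
    constructor
    · intro hF
      obtain ⟨I, hI, hIne, rfl⟩ := exists_flat_of_isFace hF
      exact ⟨I, Finset.mem_filter.2 ⟨hI, hIne⟩, rfl⟩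
    · rintro ⟨I, hI, rfl⟩
      exact isFace_flat (Finset.mem_filter.1 hI).2
  have hrhs : (∑ F ∈ Fs, ((-1 : ℤ) ^ (Module.finrank ℝ (affineSpan ℝ F).direction)) •
        indic (tanCone (poly s) F + F)) x =
      ∑ I ∈ s.powerset.filter fun I => Disjoint I J,
        iv (cell s I).Nonempty * (-1) ^ finrank ℝ (vectorSpan ℝ (cell s I)) := by
    rw [Finset.sum_apply, hFs', Finset.sum_image fun I hI I' hI' h =>
      flat_injOn (Finset.mem_filter.1 hI).2 (Finset.mem_filter.1 hI').2 h,
      Finset.sum_filter, Finset.sum_filter]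
    refine Finset.sum_congr rfl fun I hI => ?_
    by_cases hIne : (cell s I).Nonempty
    · have hmem : x ∈ tanCone (poly s) (flat s I) + flat s I ↔ Disjoint I J := by
        rw [tanCone_add_flat hIne, Finset.disjoint_left]
        refine forall₂_congr fun p hp => ?_
        rw [hJ, not_and, not_lt]
        exact ⟨fun h _ => h, fun h => h (Finset.mem_powerset.1 hI hp)⟩
      rw [if_pos hIne, Pi.smul_apply, direction_flat hIne]
      by_cases hd : Disjoint I J
      · simp [indic_mem (hmem.2 hd), hd, iv, hIne]
      · simp [indic_not_mem fun h => hd (hmem.1 h), hd]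
    · simp [hIne, iv]
  rw [hrhs]
  have hcells : HasChi Set.univ (indic {q | q ∈ poly s ∧ Disjoint (act s q) J})
      (∑ I ∈ s.powerset.filter fun I => Disjoint I J,
        iv (cell s I).Nonempty * (-1) ^ finrank ℝ (vectorSpan ℝ (cell s I))) := by
    refine (HasChi.sum _ fun I hI => HasChi.indic_cell hcpt I
      (Finset.mem_powerset.1 (Finset.mem_filter.1 hI).1)).congr ?_ rfl
    ext q
    rw [Finset.sum_apply]
    by_cases hq : q ∈ poly s
    · have hterm : ∀ I, indic (cell s I) q = if act s q = I then 1 else 0 := fun I => by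
        by_cases h : act s q = I
        · rw [if_pos h, indic_mem (show q ∈ cell s I from ⟨hq, h⟩)]
        · rw [if_neg h, indic_not_mem fun h' => h h'.2]
      simp only [hterm, Finset.sum_ite_eq, Finset.mem_filter, Finset.mem_powerset]
      have hsub : act s q ⊆ s := fun p hp => (mem_act.1 hp).1
      by_cases hd : Disjoint (act s q) J
      · rw [if_pos ⟨hsub, hd⟩, indic_mem (K := {q | q ∈ poly s ∧ Disjoint (act s q) J}) ⟨hq, hd⟩]
      · rw [if_neg fun h => hd h.2, indic_not_mem fun h => hd h.2]
    · rw [indic_not_mem fun h => hq h.1]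
      exact Finset.sum_eq_zero fun I _ => indic_not_mem fun h => hq h.1
  rcases J.eq_empty_or_nonempty with hJe | hJne
  · have hx : x ∈ poly s := fun p hp => by
      by_contra h
      have := (hJ p).2 ⟨hp, not_le.1 h⟩
      simp [hJe] at this
    have hset : {q | q ∈ poly s ∧ Disjoint (act s q) J} = poly s := by ext; simp [hJe]
    rw [indic_mem hx]
    refine HasChi.unique (HasChi.of (A := Set.univ) _ (Set.subset_univ _) hne hcpt
      (convex_poly s)) (hset ▸ hcells)
  · have hx : x ∉ poly s := fun h => by
      obtain ⟨j, hj⟩ := hJne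
      exact absurd (h j ((hJ j).1 hj).1) (not_le.2 ((hJ j).1 hj).2)
    rw [indic_not_mem hx]
    exact (HasChi.invisible hcpt hne hJ hJne).unique hcells
end
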